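/- arXiv:1705.01333 — 11 statements merged into one kernel-verified Lean document; each statement's English description precedes it below -/
import Mathlib

section
/- For every integer n ≥ 1, every real coupling constant g, every pair (q,p) ∈ ℝⁿ × ℝⁿ with q₁ > q₂ > … > q_n, and every z ∈ ℂ, the functions A(z) = det(z·1_n − L), C(z) = tr(Q · adj(z·1_n − L) · v vᵀ) and D(z) = tr(Q · adj(z·1_n − L)) satisfy C(z) = D(z) + (i g / 2) · A''(z), where A'' denotes the second derivative of the polynomial z ↦ det(z·1_n − L). -/
open Polynomial Matrix in
lemma aux_charpoly_derivative {n : ℕ} (L : Matrix (Fin n) (Fin n) ℂ) :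
    derivative (charmatrix L).det = (charmatrix L).adjugate.trace := by
  have hd : ∀ M : Matrix (Fin n) (Fin n) ℂ[X], M.det =
      ∑ σ : Equiv.Perm (Fin n), ((Equiv.Perm.sign σ : ℤ) : ℂ[X]) * ∏ i, M i (σ i) := by
    intro M
    rw [← det_transpose, det_apply']
    rfl
  simp only [trace, diag_apply, adjugate_apply]
  simp only [hd]
  rw [derivative_sum, Finset.sum_comm]
  refine Finset.sum_congr rfl fun σ _ => ?_
  rw [← Finset.mul_sum, derivative_mul, derivative_intCast, zero_mul, zero_add,
    derivative_prod_finset]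
  congr 1
  refine Finset.sum_congr rfl fun i _ => ?_
  rw [← Finset.prod_erase_mul _ _ (Finset.mem_univ i)]
  congr 1
  · refine Finset.prod_congr rfl fun j hj => ?_
    rw [updateRow_ne (Finset.ne_of_mem_erase hj)]
  · rw [updateRow_self]
    by_cases h : σ i = i
    · simp [h, charmatrix_apply_eq]
    · rw [charmatrix_apply_ne _ _ _ (Ne.symm h)]
      simp [h]

open Polynomial Matrix in
lemma aux_second {n : ℕ} (L : Matrix (Fin n) (Fin n) ℂ) :
    (charmatrix L).det * derivative (derivative (charmatrix L).det) =
      (charmatrix L).adjugate.trace ^ 2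
        - ((charmatrix L).adjugate * (charmatrix L).adjugate).trace := by
  set M := charmatrix L with hM
  set B := M.adjugate with hB
  have dmul : ∀ X Y : Matrix (Fin n) (Fin n) ℂ[X],
      (X * Y).map derivative = X.map derivative * Y + X * Y.map derivative := by
    intro X Y
    ext1 i j
    simp [mul_apply, Finset.sum_add_distrib]
  have dM : M.map derivative = 1 := by
    ext1 i j
    by_cases h : i = j
    · subst h; simp [hM, charmatrix_apply_eq]
    · simp [hM, charmatrix_apply_ne _ _ _ h, h]
  have h1 : B.map derivative * M + B = (derivative M.det) • 1 := by
    have := congrArg (fun X => X.map derivative) (adjugate_mul M)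
    simp only [dmul, dM, mul_one] at this
    rw [this]
    ext1 i j
    by_cases h : i = j
    · subst h; simp
    · simp [h]
  have h2 := congrArg (fun X => (X * B).trace) h1
  simp only [add_mul, Matrix.mul_assoc, hB, mul_adjugate] at h2
  rw [← hB] at h2
  simp only [trace_add, Matrix.mul_smul, Matrix.smul_mul, Matrix.mul_one, Matrix.one_mul,
    trace_smul, smul_eq_mul] at h2
  have h3 : (B.map derivative).trace = derivative (derivative M.det) := by
    rw [hM, aux_charpoly_derivative, ← hM, ← hB]
    simp [trace]
  have h4 : derivative M.det = B.trace := aux_charpoly_derivative L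
  rw [h3] at h2
  rw [h4] at h2 ⊢
  linear_combination h2

open Matrix in
lemma aux_alg {R : Type*} [CommRing R] [IsDomain R] {n : ℕ}
    (M B Q V : Matrix (Fin n) (Fin n) R) (c d a : R) (hc : c ≠ 0) (hd : d ≠ 0)
    (hBM : B * M = d • 1) (hMB : M * B = d • 1)
    (hQ : Q * M - M * Q = -(c • (V - 1)))
    (hV : (B * V * (B * V)).trace = (B * V).trace ^ 2)
    (ha : d * a = B.trace ^ 2 - (B * B).trace) :
    2 * (Q * B * V).trace = 2 * (Q * B).trace + c * a := by
  have e1 : (B * V).trace = B.trace := by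
    have h := congrArg (fun X => (B * X).trace) hQ
    have h1 : (B * (Q * M)).trace = d * Q.trace := by
      rw [trace_mul_comm, Matrix.mul_assoc, hMB]; simp
    have h2 : (B * (M * Q)).trace = d * Q.trace := by
      rw [← Matrix.mul_assoc, hBM]; simp
    simp only [mul_sub, trace_sub, h1, h2, mul_neg, Matrix.mul_smul, trace_neg, trace_smul,
      smul_eq_mul, mul_one] at h
    apply mul_left_cancel₀ hc
    linear_combination h
  have e2 : (B * Q * V).trace + (Q * B * V).trace = 2 * (Q * B).trace := by
    have h := congrArg (fun X => (B * (Q * X + X * Q)).trace) hQ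
    have h0 : Q * (Q * M - M * Q) + (Q * M - M * Q) * Q = Q * Q * M - M * (Q * Q) := by
      noncomm_ring
    have h1 : (B * (Q * Q * M)).trace = d * (Q * Q).trace := by
      rw [trace_mul_comm, Matrix.mul_assoc, hMB]; simp
    have h2 : (B * (M * (Q * Q))).trace = d * (Q * Q).trace := by
      rw [← Matrix.mul_assoc, hBM]; simp
    have h3 : (B * (V * Q)).trace = (Q * B * V).trace := by
      rw [← Matrix.mul_assoc, trace_mul_comm, Matrix.mul_assoc]
    have h4 : (B * Q).trace = (Q * B).trace := trace_mul_comm _ _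
    simp only [h0] at h
    simp only [mul_sub, sub_mul, mul_add, trace_sub, trace_add, h1, h2, mul_neg, neg_mul,
      Matrix.mul_smul, Matrix.smul_mul, trace_neg, trace_smul,
      smul_eq_mul, mul_one, one_mul, h3, h4, ← Matrix.mul_assoc B Q V] at h
    apply mul_left_cancel₀ hc
    linear_combination h
  have e3 : d • (B * Q - Q * B) = -(c • (B * V * B - B * B)) := by
    have h := congrArg (fun X => B * X * B) hQ
    have h0 : B * (Q * M - M * Q) * B = B * Q * (M * B) - (B * M) * Q * B := by noncomm_ring
    simp only [h0, hMB, hBM] at h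
    simpa [mul_sub, sub_mul, smul_sub] using h
  have e4 : (B * B * V).trace = (B * B).trace := by
    have h := congrArg trace e3
    simp only [trace_smul, trace_sub, trace_neg, trace_mul_comm B Q, sub_self, smul_eq_mul,
      mul_zero] at h
    have h1 : (B * V * B).trace = (B * B * V).trace := by
      rw [trace_mul_comm, Matrix.mul_assoc]
    rw [h1] at h
    apply mul_left_cancel₀ hc
    linear_combination h
  have e5 := congrArg (fun X => (X * V).trace) e3
  simp only [Matrix.smul_mul, sub_mul, neg_mul, trace_smul, trace_sub, trace_neg, smul_eq_mul,
    e4, Matrix.mul_assoc (B * V) B V, hV, e1] at e5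
  apply mul_left_cancel₀ hd
  linear_combination d * e2 - e5 - c * ha

/-- Thesis Theorem 1.2 (the identity behind Sklyanin's formula for the rational
Calogero-Moser system): `C(z) = D(z) + (i g / 2) A''(z)`. -/
theorem stmt0 (n : ℕ) (hn : 1 ≤ n) (g : ℝ) (q p : Fin n → ℝ)
    (hq : ∀ i j : Fin n, i < j → q j < q i) (z : ℂ) :
    let L : Matrix (Fin n) (Fin n) ℂ :=
      Matrix.of fun j k =>
        if j = k then (p j : ℂ) else Complex.I * (g : ℂ) / ((q j : ℂ) - (q k : ℂ))
    let Q : Matrix (Fin n) (Fin n) ℂ := Matrix.diagonal fun j => (q j : ℂ)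
    let A : ℂ → ℂ := fun w => (w • (1 : Matrix (Fin n) (Fin n) ℂ) - L).det
    let C : ℂ → ℂ := fun w =>
      (Q * (w • (1 : Matrix (Fin n) (Fin n) ℂ) - L).adjugate *
          Matrix.of (fun _ _ => (1 : ℂ))).trace
    let D : ℂ → ℂ := fun w => (Q * (w • (1 : Matrix (Fin n) (Fin n) ℂ) - L).adjugate).trace
    C z = D z + Complex.I * (g : ℂ) / 2 * iteratedDeriv 2 A z := by
  intro L Q A C D
  by_cases hg : g = 0
  · have hL : z • (1 : Matrix (Fin n) (Fin n) ℂ) - L =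
        Matrix.diagonal (fun j => z - (p j : ℂ)) := by
      ext1 i j
      by_cases h : i = j
      · subst h; simp [L]
      · simp [L, h, hg]
    simp only [C, D, hL, Matrix.adjugate_diagonal, Q, hg, Matrix.diagonal_mul_diagonal]
    simp [Matrix.trace]
  let M : Matrix (Fin n) (Fin n) (Polynomial ℂ) := Matrix.charmatrix L
  let c : Polynomial ℂ := Polynomial.C (Complex.I * (g : ℂ))
  let Qp : Matrix (Fin n) (Fin n) (Polynomial ℂ) :=
    Matrix.diagonal fun j => Polynomial.C (q j : ℂ)
  let V : Matrix (Fin n) (Fin n) (Polynomial ℂ) := Matrix.of (fun _ _ => 1)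
  have hc : c ≠ 0 := by
    simp [c, hg]
  have hd : M.det ≠ 0 := (Matrix.charpoly_monic L).ne_zero
  have hne : ∀ i j, i ≠ j → (q i : ℂ) - (q j : ℂ) ≠ 0 := by
    intro i j hij h
    have h' : q i = q j := by exact_mod_cast sub_eq_zero.mp h
    rcases lt_or_gt_of_ne hij with h1 | h1
    · exact absurd (hq _ _ h1) (by simp [h'])
    · exact absurd (hq _ _ h1) (by simp [h'])
  have hQM : Qp * M - M * Qp = -(c • (V - 1)) := by
    ext1 i j
    simp only [Qp, Matrix.sub_apply, Matrix.diagonal_mul, Matrix.mul_diagonal, Matrix.neg_apply,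
      Matrix.smul_apply, V, Matrix.of_apply, M]
    by_cases h : i = j
    · subst h; simp [mul_comm]
    · rw [Matrix.charmatrix_apply_ne _ _ _ h, Matrix.one_apply_ne h]
      simp only [L, Matrix.of_apply, if_neg h, c, sub_zero, smul_eq_mul, mul_one]
      have := hne i j h
      rw [← Polynomial.C_neg, ← Polynomial.C_mul, ← Polynomial.C_mul, ← Polynomial.C_sub,
        ← Polynomial.C_neg]
      congr 1
      field_simp
      ring
  have hV : (M.adjugate * V * (M.adjugate * V)).trace = (M.adjugate * V).trace ^ 2 := by
    simp only [Matrix.trace, Matrix.diag_apply, Matrix.mul_apply, V, Matrix.of_apply, mul_one]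
    rw [sq, Finset.sum_mul_sum]
  have key := aux_alg M M.adjugate Qp V c M.det _ hc hd (Matrix.adjugate_mul M)
    (Matrix.mul_adjugate M) hQM hV (aux_second L)
  have key2 := congrArg (Polynomial.evalRingHom z) key
  have hMz : ∀ w, (Polynomial.evalRingHom w).mapMatrix M = w • 1 - L := by
    intro w
    ext1 i j
    by_cases h : i = j
    · subst h; simp [M]
    · simp [M, Matrix.charmatrix_apply_ne _ _ _ h, h]
  have hQz : (Polynomial.evalRingHom z).mapMatrix Qp = Q := by
    ext1 i j
    by_cases h : i = j
    · subst h; simp [Qp, Q]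
    · simp [Qp, Q, h]
  have hVz : (Polynomial.evalRingHom z).mapMatrix V = Matrix.of (fun _ _ => (1 : ℂ)) := by
    ext1 i j
    simp [V]
  have htr : ∀ X : Matrix (Fin n) (Fin n) (Polynomial ℂ),
      Polynomial.evalRingHom z X.trace = ((Polynomial.evalRingHom z).mapMatrix X).trace := by
    intro X
    simp [Matrix.trace]
  have hA : A = fun w => M.det.eval w := by
    funext w
    have := (Polynomial.evalRingHom w).map_det M
    rw [hMz] at this
    exact this.symm
  have hA2 : iteratedDeriv 2 A z = (Polynomial.derivative (Polynomial.derivative M.det)).eval z := by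
    rw [hA, iteratedDeriv_succ, iteratedDeriv_one]
    have : deriv (fun w => M.det.eval w) = fun w => (Polynomial.derivative M.det).eval w := by
      funext w
      exact Polynomial.deriv _
    rw [this]
    exact Polynomial.deriv _
  rw [map_add, map_mul, map_mul, map_mul, htr, htr, map_mul, map_mul, RingHom.map_adjugate,
    hMz, hQz, hVz] at key2
  have hcz : Polynomial.evalRingHom z c = Complex.I * g := by simp [c]
  have h2z : Polynomial.evalRingHom z 2 = 2 := map_ofNat _ 2
  rw [hcz, h2z, Polynomial.coe_evalRingHom] at key2
  rw [hA2]
  change 2 * C z = 2 * D z + _ at key2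
  linear_combination key2 / 2
end

section
/- Let μ, ν, λ be real numbers with μ ≠ 0, λ ≠ 0, λ ≠ μ and λ ≠ −μ. Then a pair of real numbers (W, W') satisfies the two equations (μ+λ)W + (μ−λ)W' − 2(μ−ν) = 0 and λ²·W·W' − μ(μ−ν)(W + W') + (μ−ν)² + μ² − λ² = 0 if and only if (W, W') = (1 − ν/λ, 1 + ν/λ) or (W, W') = (−1 + (2μ−ν)/λ, −1 − (2μ−ν)/λ). -/
/-- The pair of algebraic equations (2.103)-(2.104) of the thesis has exactly the two
solutions displayed in (2.105)-(2.106). -/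
theorem stmt1 (μ ν lam W W' : ℝ) (hμ : μ ≠ 0) (h0 : lam ≠ 0) (h1 : lam ≠ μ)
    (h2 : lam ≠ -μ) :
    ((μ + lam) * W + (μ - lam) * W' - 2 * (μ - ν) = 0 ∧
        lam ^ 2 * W * W' - μ * (μ - ν) * (W + W') + (μ - ν) ^ 2 + μ ^ 2 - lam ^ 2 = 0) ↔
      (W = 1 - ν / lam ∧ W' = 1 + ν / lam) ∨
        (W = -1 + (2 * μ - ν) / lam ∧ W' = -1 - (2 * μ - ν) / lam) := by
  constructor
  · rintro ⟨e1, e2⟩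
    have key : (lam - μ) * ((lam + μ) * ((W + W' - 2) * (W + W' + 2))) = 0 := by
      linear_combination 4 * e2 + (2 * (μ - ν) - μ * (W + W') + lam * (W - W')) * e1
    have h1' : lam - μ ≠ 0 := sub_ne_zero.mpr h1
    have h2' : lam + μ ≠ 0 := fun h => h2 (by linarith)
    have key2 := (mul_eq_zero.mp ((mul_eq_zero.mp key).resolve_left h1')).resolve_left h2'
    rcases mul_eq_zero.mp key2 with h | h
    · left
      constructor
      · field_simp
        linear_combination (1 / 2) * e1 + (lam - μ) / 2 * h
      · field_simp
        linear_combination (-1 / 2) * e1 + (lam + μ) / 2 * h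
    · right
      constructor
      · field_simp
        linear_combination (1 / 2) * e1 + (lam - μ) / 2 * h
      · field_simp
        linear_combination (-1 / 2) * e1 + (lam + μ) / 2 * h
  · rintro (⟨rfl, rfl⟩ | ⟨rfl, rfl⟩)
    · constructor <;> field_simp <;> ring
    · constructor <;> field_simp <;> ring
end

section
/- Fix an integer n ≥ 1 and real parameters μ, ν. Let λ ∈ ℝⁿ satisfy: λ_c ≠ 0 for all c; λ_a² ≠ λ_b² for all a ≠ b; and 2μ ∉ {λ_a−λ_b, −(λ_a−λ_b), λ_a+λ_b, −(λ_a+λ_b)} for all a ≠ b. Then Σ_{c=1}^{n} [ (1 − ν/λ_c)/w_c + (1 + ν/λ_c)/w_{n+c} ] = 2n, and Σ_{c=1}^{n} [ (−1 + (2μ−ν)/λ_c)/w_c + (−1 − (2μ−ν)/λ_c)/w_{n+c} ] = −2n. -/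
open Polynomial in
/-- The diagonal divided-difference polynomial. -/
lemma aux_exists {ι : Type*} [DecidableEq ι] (m : ℝ) (l : ι → ℝ) (S : Finset ι) :
    ∃ G : ℝ[X], (X ^ 2 * G).natDegree ≤ 2 * S.card ∧ (X ^ 2 * G).coeff (2 * S.card) = (S.card : ℝ) ∧
      (∀ x : ℝ, ((m - x) ^ 2 - x ^ 2) * G.eval x
        = ∏ b ∈ S, ((m - x) ^ 2 - l b ^ 2) - ∏ b ∈ S, (x ^ 2 - l b ^ 2)) ∧
      (∀ c ∈ S, ∀ x : ℝ, x ^ 2 = l c ^ 2 →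
        G.eval x = ∏ b ∈ S.erase c, ((m - x) ^ 2 - l b ^ 2)) := by
  induction S using Finset.induction_on with
  | empty => exact ⟨0, by simp⟩
  | insert a S ha ih =>
    obtain ⟨G, hd, hc, ht, he⟩ := ih
    have hq : ((C m - X) ^ 2 - C (l a ^ 2) : ℝ[X]).natDegree ≤ 2 := by compute_degree
    have hq2 : ((C m - X) ^ 2 - C (l a ^ 2) : ℝ[X]).coeff 2 = 1 := by
      have : ((C m - X) ^ 2 - C (l a ^ 2) : ℝ[X])
        = X ^ 2 - C (2 * m) * X + C (m ^ 2 - l a ^ 2) := by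
        simp only [C_mul, C_sub, C_pow, map_ofNat]; ring
      rw [this]
      compute_degree!
    have hmon : ∀ b, (X ^ 2 - C (l b ^ 2) : ℝ[X]).Monic := fun b =>
      monic_X_pow_sub_C _ (by norm_num)
    have hpm : (∏ b ∈ S, (X ^ 2 - C (l b ^ 2)) : ℝ[X]).Monic :=
      monic_prod_of_monic _ _ fun b _ => hmon b
    have hpd : (∏ b ∈ S, (X ^ 2 - C (l b ^ 2)) : ℝ[X]).natDegree = 2 * S.card := by
      rw [natDegree_prod_of_monic _ _ fun b _ => hmon b]
      simp only [natDegree_X_pow_sub_C, Finset.sum_const, smul_eq_mul]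
      ring
    have hpc : (∏ b ∈ S, (X ^ 2 - C (l b ^ 2)) : ℝ[X]).coeff (2 * S.card) = 1 := by
      rw [← hpd]; exact hpm
    refine ⟨G * ((C m - X) ^ 2 - C (l a ^ 2)) + ∏ b ∈ S, (X ^ 2 - C (l b ^ 2)), ?_, ?_, ?_, ?_⟩
    · rw [Finset.card_insert_of_notMem ha, mul_add, ← mul_assoc]
      refine natDegree_add_le_of_degree_le (natDegree_mul_le_of_le hd hq) ?_
      refine (natDegree_mul_le_of_le (natDegree_X_pow_le 2) hpd.le).trans (by omega)
    · rw [Finset.card_insert_of_notMem ha, mul_add, ← mul_assoc, coeff_add,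
        show 2 * (S.card + 1) = 2 * S.card + 2 by ring,
        coeff_mul_add_eq_of_natDegree_le hd hq, hc, hq2, coeff_X_pow_mul, hpc]
      push_cast; ring
    · intro x
      have := ht x
      simp only [eval_add, eval_mul, eval_sub, eval_pow, eval_C, eval_X, eval_prod,
        Finset.prod_insert ha]
      linear_combination ((m - x) ^ 2 - l a ^ 2) * this
    · intro c hcS x hx
      simp only [eval_add, eval_mul, eval_sub, eval_pow, eval_C, eval_X, eval_prod]
      rcases Finset.mem_insert.1 hcS with rfl | hcS
      · rw [Finset.erase_insert ha, ← hx]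
        linear_combination ht x
      · have hne : a ≠ c := fun h => ha (h ▸ hcS)
        rw [Finset.erase_insert_of_ne hne, Finset.prod_insert (by simp [ha]), he c hcS x hx,
          Finset.prod_eq_zero hcS (by rw [hx, sub_self])]
        ring

lemma aux_prod_inl {n : ℕ} (l : Fin n → ℝ) (c : Fin n) :
    ∏ j ∈ (Finset.univ : Finset (Fin n ⊕ Fin n)).erase (Sum.inl c),
      (l c - Sum.elim l (fun b => -l b) j)
      = 2 * l c * ∏ b ∈ Finset.univ.erase c, (l c ^ 2 - l b ^ 2) := by
  have h : (Finset.univ : Finset (Fin n ⊕ Fin n)).erase (Sum.inl c)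
      = (Finset.univ.erase c).disjSum Finset.univ := by
    ext (x | x) <;> simp
  rw [h, Finset.prod_disjSum, ← Finset.mul_prod_erase Finset.univ _ (Finset.mem_univ c)]
  simp only [Sum.elim_inl, Sum.elim_inr]
  rw [mul_left_comm, ← Finset.prod_mul_distrib]
  congr 1
  · ring
  · exact Finset.prod_congr rfl fun b _ => by ring

lemma aux_prod_inr {n : ℕ} (l : Fin n → ℝ) (c : Fin n) :
    ∏ j ∈ (Finset.univ : Finset (Fin n ⊕ Fin n)).erase (Sum.inr c),
      (-l c - Sum.elim l (fun b => -l b) j)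
      = -(2 * l c) * ∏ b ∈ Finset.univ.erase c, (l c ^ 2 - l b ^ 2) := by
  have h : (Finset.univ : Finset (Fin n ⊕ Fin n)).erase (Sum.inr c)
      = Finset.univ.disjSum (Finset.univ.erase c) := by
    ext (x | x) <;> simp
  rw [h, Finset.prod_disjSum, ← Finset.mul_prod_erase Finset.univ _ (Finset.mem_univ c)]
  simp only [Sum.elim_inl, Sum.elim_inr]
  rw [mul_assoc, ← Finset.prod_mul_distrib]
  congr 1
  · ring
  · exact Finset.prod_congr rfl fun b _ => by ring

open Polynomial in
lemma aux_lagrange {n : ℕ} (l : Fin n → ℝ) (h0 : ∀ c, l c ≠ 0)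
    (h1 : ∀ a b : Fin n, a ≠ b → l a ^ 2 ≠ l b ^ 2) (P : ℝ[X]) (hP : P.degree < (2 * n : ℕ)) :
    P.coeff (2 * n - 1) = ∑ c, (P.eval (l c) - P.eval (-l c)) /
      (2 * l c * ∏ b ∈ Finset.univ.erase c, (l c ^ 2 - l b ^ 2)) := by
  have hinj : Function.Injective (Sum.elim l (fun b => -l b)) := by
    rintro (a | a) (b | b) h <;> simp only [Sum.elim_inl, Sum.elim_inr] at h
    · by_contra hne
      exact h1 a b (fun h' => hne (by rw [h'])) (by rw [h])
    · exfalso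
      by_cases hab : a = b
      · subst hab; exact h0 a (by linarith)
      · exact h1 a b hab (by rw [h]; ring)
    · exfalso
      by_cases hab : a = b
      · subst hab; exact h0 a (by linarith)
      · exact h1 a b hab (by rw [← h]; ring)
    · by_contra hne
      exact h1 a b (fun h' => hne (by rw [h'])) (by rw [neg_inj.1 h])
  have hcard : (Finset.univ : Finset (Fin n ⊕ Fin n)).card = 2 * n := by
    simp; ring
  have := Lagrange.coeff_eq_sum (s := Finset.univ) (v := Sum.elim l (fun b => -l b))
    hinj.injOn (P := P) (by rw [hcard]; exact hP)
  rw [hcard, Fintype.sum_sum_type] at this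
  rw [this, ← Finset.sum_add_distrib]
  refine Finset.sum_congr rfl fun c _ => ?_
  simp only [Sum.elim_inl, Sum.elim_inr, aux_prod_inl, aux_prod_inr]
  rw [sub_div, neg_mul, div_neg]
  ring

/-- The identities (2.107) of the thesis: `Σ F_k^+ = 2n` and `Σ F_k^- = -2n`. -/
theorem stmt2 (n : ℕ) (hn : 1 ≤ n) (μ ν : ℝ) (lam : Fin n → ℝ)
    (h0 : ∀ c, lam c ≠ 0)
    (h1 : ∀ a b : Fin n, a ≠ b → lam a ^ 2 ≠ lam b ^ 2)
    (h2 : ∀ a b : Fin n, a ≠ b →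
      2 * μ ≠ lam a - lam b ∧ 2 * μ ≠ -(lam a - lam b) ∧
        2 * μ ≠ lam a + lam b ∧ 2 * μ ≠ -(lam a + lam b)) :
    let wm : Fin n → ℝ := fun a =>
      ∏ b ∈ Finset.univ.erase a,
        (lam a - lam b) * (lam a + lam b) /
          ((2 * μ - (lam a - lam b)) * (2 * μ - (lam a + lam b)))
    let wp : Fin n → ℝ := fun a =>
      ∏ b ∈ Finset.univ.erase a,
        (lam a - lam b) * (lam a + lam b) /
          ((2 * μ + lam a - lam b) * (2 * μ + lam a + lam b))
    (∑ c, ((1 - ν / lam c) / wm c + (1 + ν / lam c) / wp c) = 2 * (n : ℝ)) ∧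
      (∑ c, ((-1 + (2 * μ - ν) / lam c) / wm c + (-1 - (2 * μ - ν) / lam c) / wp c)
        = -(2 * (n : ℝ))) := by
  intro wm wp
  obtain ⟨G, hd, hc, -, he⟩ := aux_exists (2 * μ) lam Finset.univ
  rw [Finset.card_univ, Fintype.card_fin] at hd hc
  have hG0 : ∀ j, 2 * n < j + 2 → G.coeff j = 0 := fun j hj => by
    rw [← Polynomial.coeff_X_pow_mul G 2 j]
    exact Polynomial.coeff_eq_zero_of_natDegree_lt (lt_of_le_of_lt hd hj)
  have hG1 : G.coeff (2 * n - 2) = n := by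
    rw [← Polynomial.coeff_X_pow_mul G 2, show 2 * n - 2 + 2 = 2 * n by omega, hc]
  have hm : ∀ c, 1 / wm c
      = G.eval (lam c) / ∏ b ∈ Finset.univ.erase c, (lam c ^ 2 - lam b ^ 2) := fun c => by
    rw [he c (Finset.mem_univ c) _ rfl, ← Finset.prod_div_distrib, one_div, ← Finset.prod_inv_distrib]
    refine Finset.prod_congr rfl fun b _ => ?_
    rw [inv_div]
    congr 1 <;> ring
  have hp : ∀ c, 1 / wp c
      = G.eval (-lam c) / ∏ b ∈ Finset.univ.erase c, (lam c ^ 2 - lam b ^ 2) := fun c => by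
    rw [he c (Finset.mem_univ c) _ (by ring), ← Finset.prod_div_distrib, one_div,
      ← Finset.prod_inv_distrib]
    refine Finset.prod_congr rfl fun b _ => ?_
    rw [inv_div]
    congr 1 <;> ring
  have hA : ∑ c, (1 / wm c + 1 / wp c) = 2 * (n : ℝ) := by
    have := aux_lagrange lam h0 h1 (Polynomial.X * G) (by
      rw [Polynomial.degree_lt_iff_coeff_zero]
      intro j hj
      obtain ⟨k, rfl⟩ : ∃ k, j = k + 1 := ⟨j - 1, by omega⟩
      rw [Polynomial.coeff_X_mul]
      exact hG0 k (by omega))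
    rw [show 2 * n - 1 = (2 * n - 2) + 1 by omega, Polynomial.coeff_X_mul, hG1] at this
    rw [this, Finset.mul_sum]
    refine Finset.sum_congr rfl fun c _ => ?_
    rw [hm, hp, Polynomial.eval_mul, Polynomial.eval_mul, Polynomial.eval_X, Polynomial.eval_X]
    have := h0 c
    rw [← add_div, mul_comm (2 * lam c), ← div_div, mul_div_assoc', ]
    field_simp
    ring
  have hB : ∑ c, (1 / lam c * (1 / wm c - 1 / wp c)) = 0 := by
    have := aux_lagrange lam h0 h1 G (by
      rw [Polynomial.degree_lt_iff_coeff_zero]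
      intro j hj
      exact hG0 j (by omega))
    rw [hG0 _ (by omega)] at this
    rw [← mul_zero (2 : ℝ), this, Finset.mul_sum]
    refine Finset.sum_congr rfl fun c _ => ?_
    rw [hm, hp]
    have := h0 c
    rw [← sub_div, mul_comm (2 * lam c), ← div_div]
    field_simp
  constructor
  · calc _ = ∑ c, (1 / wm c + 1 / wp c) - ν * ∑ c, (1 / lam c * (1 / wm c - 1 / wp c)) := by
          rw [Finset.mul_sum, ← Finset.sum_sub_distrib]
          exact Finset.sum_congr rfl fun c _ => by ring
      _ = _ := by rw [hA, hB]; ring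
  · calc _ = -∑ c, (1 / wm c + 1 / wp c)
            + (2 * μ - ν) * ∑ c, (1 / lam c * (1 / wm c - 1 / wp c)) := by
          rw [Finset.mul_sum, ← Finset.sum_neg_distrib, ← Finset.sum_add_distrib]
          exact Finset.sum_congr rfl fun c _ => by ring
      _ = _ := by rw [hA, hB]; ring
end

section
/- For every integer n ≥ 1 and every q ∈ ℝⁿ with π/2 > q₁ > … > q_n > 0, the n×n real matrix X with entries X_{a,b} = (−1)^{a+1} · 2 · sin(2 a q_b) (a, b = 1,…,n) satisfies det X = (−1)^{n(n+3)/2} · 2^{n(n+1)/2} · ∏_{b=1}^{n} sin(2 q_b) · ∏_{1 ≤ b < c ≤ n} (cos(2 q_c) − cos(2 q_b)); in particular det X ≠ 0. -/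
/-- Proposition 2.17 of the thesis: the explicit Vandermonde-type evaluation of the
Jacobian determinant, which is nonvanishing on the alcove `π/2 > q₁ > … > q_n > 0`. -/
theorem stmt4 (n : ℕ) (hn : 1 ≤ n) (q : Fin n → ℝ)
    (hq1 : ∀ i, q i < Real.pi / 2) (hdec : ∀ i j : Fin n, i < j → q j < q i)
    (hpos : ∀ i, 0 < q i) :
    let X : Matrix (Fin n) (Fin n) ℝ :=
      Matrix.of fun a b =>
        (-1 : ℝ) ^ ((a : ℕ) + 1 + 1) * 2 * Real.sin (2 * (((a : ℕ) : ℝ) + 1) * q b)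
    (X.det = (-1 : ℝ) ^ (n * (n + 3) / 2) * 2 ^ (n * (n + 1) / 2) *
        (∏ b, Real.sin (2 * q b)) *
        ∏ p ∈ (Finset.univ : Finset (Fin n × Fin n)).filter fun p => p.1 < p.2,
          (Real.cos (2 * q p.2) - Real.cos (2 * q p.1))) ∧
      X.det ≠ 0 := by
  intro X
  have key : X.det = (-1 : ℝ) ^ (n * (n + 3) / 2) * 2 ^ (n * (n + 1) / 2) *
        (∏ b, Real.sin (2 * q b)) *
        ∏ p ∈ (Finset.univ : Finset (Fin n × Fin n)).filter fun p => p.1 < p.2,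
          (Real.cos (2 * q p.2) - Real.cos (2 * q p.1)) := by
    let v : Fin n → ℝ := fun b => Real.cos (2 * q b)
    let P : Fin n → Polynomial ℝ := fun a =>
      Polynomial.C ((2 ^ (a : ℕ) : ℝ)⁻¹) * Polynomial.Chebyshev.U ℝ ((a : ℕ) : ℤ)
    have hne : ∀ a : Fin n, ((2 ^ (a : ℕ) : ℝ)⁻¹) ≠ 0 := fun a => by positivity
    have hV := Matrix.det_eval_matrixOfPolynomials_eq_det_vandermonde v P
      (fun a => by
        simp only [P]
        rw [Polynomial.natDegree_C_mul (hne a), Polynomial.Chebyshev.natDegree_U_natCast])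
      (fun a => by
        simp only [P]
        rw [Polynomial.Monic, Polynomial.leadingCoeff_mul, Polynomial.leadingCoeff_C,
          Polynomial.Chebyshev.leadingCoeff_U_natCast]
        exact inv_mul_cancel₀ (by positivity))
    have hX : X = Matrix.of fun (a b : Fin n) => (((-1 : ℝ) ^ (a : ℕ) * 2 ^ ((a : ℕ) + 1))) *
        (Matrix.of fun a b => Real.sin (2 * q b) *
          (Matrix.of fun i j => (P j).eval (v i) : Matrix (Fin n) (Fin n) ℝ).transpose a b :
            Matrix (Fin n) (Fin n) ℝ) a b := by
      ext a b
      have hU := Polynomial.Chebyshev.U_real_cos (2 * q b) ((a : ℕ) : ℤ)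
      have e : Real.sin (2 * (((a : ℕ) : ℝ) + 1) * q b) =
          Real.sin (((((a : ℕ) : ℤ) : ℝ) + 1) * (2 * q b)) := by
        congr 1; push_cast; ring
      simp only [X, P, v, Matrix.of_apply, Matrix.transpose_apply, Polynomial.eval_mul,
        Polynomial.eval_C]
      rw [e, ← hU]
      field_simp
      ring
    have hc : ∀ m : ℕ, ∏ a : Fin m, ((-1 : ℝ) ^ (a : ℕ) * 2 ^ ((a : ℕ) + 1)) =
        (-1 : ℝ) ^ (m * (m + 3) / 2) * 2 ^ (m * (m + 1) / 2) := by
      intro m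
      induction m with
      | zero => simp
      | succ k ih =>
        rw [Fin.prod_univ_castSucc]
        simp only [Fin.val_castSucc, Fin.val_last]
        rw [ih]
        have h1 : (k + 1) * (k + 1 + 3) / 2 = k * (k + 3) / 2 + (k + 2) := by
          rw [show (k + 1) * (k + 1 + 3) = k * (k + 3) + 2 * (k + 2) by ring]
          omega
        have h2 : (k + 1) * (k + 1 + 1) / 2 = k * (k + 1) / 2 + (k + 1) := by
          rw [show (k + 1) * (k + 1 + 1) = k * (k + 1) + 2 * (k + 1) by ring]
          omega
        rw [h1, h2]
        simp only [pow_add]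
        ring
    rw [hX, Matrix.det_mul_column, Matrix.det_mul_row, Matrix.det_transpose, ← hV,
      Matrix.det_vandermonde, hc, mul_assoc _ (∏ b, Real.sin (2 * q b))]
    congr 2
    rw [Finset.prod_filter, ← Finset.univ_product_univ, Finset.prod_product]
    refine Finset.prod_congr rfl fun i _ => ?_
    rw [← Finset.prod_filter]
    refine Finset.prod_congr ?_ fun j _ => rfl
    ext j
    simp
  refine ⟨key, ?_⟩
  rw [key]
  refine mul_ne_zero (mul_ne_zero (by positivity) ?_) ?_
  · refine Finset.prod_ne_zero_iff.2 fun b _ => (Real.sin_pos_of_pos_of_lt_pi ?_ ?_).ne'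
    · linarith [hpos b]
    · linarith [hq1 b]
  · refine Finset.prod_ne_zero_iff.2 fun p hp => ?_
    have h := hdec p.1 p.2 (Finset.mem_filter.1 hp).2
    have := Real.cos_lt_cos_of_nonneg_of_le_pi (x := 2 * q p.2) (y := 2 * q p.1)
      (by linarith [hpos p.2]) (by linarith [hq1 p.1]) (by linarith)
    exact (sub_pos.2 this).ne'
end

section
/- For every integer r ≥ 0 and every real number α, 2^r · cos(α)^r · sin(α) = Σ_{s=0}^{⌊r/2⌋} [ C(r,s) − C(r,s−1) ] · sin((r − 2s + 1)α), where C(r,s) denotes the binomial coefficient 'r choose s' with the convention C(r,−1) = 0. -/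
/-- The coefficient C(r,s) - C(r,s-1). -/
noncomputable def ballotCoeff (r s : ℕ) : ℝ :=
  (r.choose s : ℝ) - if s = 0 then 0 else (r.choose (s - 1) : ℝ)

theorem ballotCoeff_zero (r : ℕ) : ballotCoeff r 0 = 1 := by simp [ballotCoeff]

theorem ballotCoeff_succ (r s : ℕ) :
    ballotCoeff (r + 1) (s + 1) = ballotCoeff r s + ballotCoeff r (s + 1) := by
  cases s with
  | zero => simp [ballotCoeff]
  | succ t =>
    simp only [ballotCoeff, Nat.choose_succ_succ' r (t + 1), Nat.choose_succ_succ' r t,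
      Nat.add_sub_cancel, Nat.succ_ne_zero, if_false]
    push_cast
    ring

theorem ballotCoeff_middle (k : ℕ) : ballotCoeff (2 * k + 1) (k + 1) = 0 := by
  have h : (2 * k + 1).choose (k + 1) = (2 * k + 1).choose k :=
    Nat.choose_symm_of_eq_add (by omega)
  simp [ballotCoeff, h]

theorem ballotCoeff_sum (r : ℕ) (F : ℕ → ℝ) (N : ℕ) :
    ∑ s ∈ Finset.range (N + 1), ballotCoeff (r + 1) s * F s =
      ∑ s ∈ Finset.range (N + 1), ballotCoeff r s * F s +
        ∑ s ∈ Finset.range N, ballotCoeff r s * F (s + 1) := by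
  induction N with
  | zero => simp [ballotCoeff_zero]
  | succ n ih =>
    rw [Finset.sum_range_succ, ih, Finset.sum_range_succ _ (n + 1),
      Finset.sum_range_succ (fun s => ballotCoeff r s * F (s + 1)) n, ballotCoeff_succ]
    ring

theorem ballot_sin_aux (r : ℕ) (α : ℝ) :
    2 ^ r * Real.cos α ^ r * Real.sin α =
      ∑ s ∈ Finset.range (r / 2 + 1),
        ballotCoeff r s * Real.sin (((r : ℝ) - 2 * s + 1) * α) := by
  induction r with
  | zero => simp [ballotCoeff_zero]
  | succ r ih =>
    have key : 2 ^ (r + 1) * Real.cos α ^ (r + 1) * Real.sin α =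
        ∑ s ∈ Finset.range (r / 2 + 1),
            ballotCoeff r s * Real.sin ((((r + 1 : ℕ) : ℝ) - 2 * s + 1) * α) +
          ∑ s ∈ Finset.range (r / 2 + 1),
            ballotCoeff r s * Real.sin ((((r + 1 : ℕ) : ℝ) - 2 * (s + 1 : ℕ) + 1) * α) := by
      have h : 2 ^ (r + 1) * Real.cos α ^ (r + 1) * Real.sin α =
          2 * Real.cos α * (2 ^ r * Real.cos α ^ r * Real.sin α) := by ring
      rw [h, ih, Finset.mul_sum, ← Finset.sum_add_distrib]
      refine Finset.sum_congr rfl fun s _ => ?_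
      have h1 : (((r + 1 : ℕ) : ℝ) - 2 * s + 1) * α = ((r : ℝ) - 2 * s + 1) * α + α := by
        push_cast; ring
      have h2 : (((r + 1 : ℕ) : ℝ) - 2 * (s + 1 : ℕ) + 1) * α =
          ((r : ℝ) - 2 * s + 1) * α - α := by
        push_cast; ring
      rw [h1, h2, Real.sin_add, Real.sin_sub]
      ring
    rw [key, ballotCoeff_sum r (fun s => Real.sin ((((r + 1 : ℕ) : ℝ) - 2 * s + 1) * α))]
    obtain ⟨k, rfl | rfl⟩ := Nat.even_or_odd' r
    · have e1 : 2 * k / 2 = k := by omega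
      have e2 : (2 * k + 1) / 2 = k := by omega
      rw [e1, e2, Finset.sum_range_succ
        (fun s => ballotCoeff (2 * k) s *
          Real.sin ((((2 * k + 1 : ℕ) : ℝ) - 2 * (s + 1 : ℕ) + 1) * α)) k]
      have h0 : (((2 * k + 1 : ℕ) : ℝ) - 2 * (k + 1 : ℕ) + 1) * α = 0 := by
        push_cast; ring
      rw [h0, Real.sin_zero, mul_zero, add_zero]
    · have e1 : (2 * k + 1) / 2 = k := by omega
      have e2 : (2 * k + 1 + 1) / 2 = k + 1 := by omega
      rw [e1, e2, Finset.sum_range_succ _ (k + 1), ballotCoeff_middle, zero_mul, add_zero]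

/-- The trigonometric identity (2.210) of the thesis, provable via de Moivre's formula. -/
theorem stmt5 (r : ℕ) (α : ℝ) :
    2 ^ r * Real.cos α ^ r * Real.sin α =
      ∑ s ∈ Finset.range (r / 2 + 1),
        ((r.choose s : ℝ) - if s = 0 then 0 else (r.choose (s - 1) : ℝ)) *
          Real.sin (((r : ℝ) - 2 * s + 1) * α) := by
  exact ballot_sin_aux r α
end

section
/- Fix integers n ≥ 1 and 1 ≤ l ≤ n. Then for every q ∈ ℝⁿ, (−1)^l · 𝓗_l^{(n)}(q) = 𝓚_l^{(n)}(q) + Σ_{m=0}^{l−1} ( 2(n−m)/(2n−l−m) ) · C(2n−l−m, l−m) · 𝓚_m^{(n)}(q), where C(·,·) denotes binomial coefficients (note that 2n−l−m ≥ 1 for 0 ≤ m ≤ l−1 ≤ n−1, so all coefficients are well defined). -/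
/-- The action-angle transform `𝓗_l^{(n)}` of van Diejen's `l`-th commuting Hamiltonian
for the rational BC_n Ruijsenaars-Schneider system: the sum runs over all pairs of a
subset `J ⊆ {1,…,n}` with `|J| ≤ l` and a sign assignment `ε : J → {±1}`. -/
noncomputable def Hfam (n l : ℕ) (q : Fin n → ℝ) : ℝ :=
  ∑ J : Finset (Fin n), ∑ ε : {x // x ∈ J} → Bool,
    if J.card ≤ l then
      (-2 : ℝ) ^ (l - J.card) * ((n - J.card).choose (l - J.card) : ℝ) *
        Real.cosh (∑ j : {x // x ∈ J}, if ε j then q j.1 else -(q j.1))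
    else 0

/-- The action-angle transform `𝓚_m^{(n)}` of the `m`-th coefficient of the
characteristic polynomial of Pusztai's Lax matrix. -/
noncomputable def Kfam (n m : ℕ) (q : Fin n → ℝ) : ℝ :=
  (-1 : ℝ) ^ m *
    ∑ a ∈ Finset.range (m / 2 + 1), ∑ J : Finset (Fin n), ∑ ε : {x // x ∈ J} → Bool,
      if J.card = m - 2 * a then
        ((n - (m - 2 * a)).choose a : ℝ) *
          Real.cosh (∑ j : {x // x ∈ J}, if ε j then q j.1 else -(q j.1))
      else 0

def dd (r : ℕ) (M : ℤ) : ℤ :=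
  match r with
  | 0 => 1
  | r + 1 => Ring.choose (M - r - 1) (r + 1) + Ring.choose (M - r - 2) r

lemma dd_rec (r : ℕ) (M : ℤ) : dd (r + 1) (M + 2) = dd (r + 1) (M + 1) + dd r M := by
  rcases r with _ | r
  · simp [dd]; ring
  · simp only [dd]
    have h1 := Ring.choose_succ_succ (M - r - 1) (r + 1)
    have h2 := Ring.choose_succ_succ (M - r - 2) r
    push_cast
    rw [show M + 2 - (r + 1) - 1 = M - r - 1 + 1 by ring, h1,
      show M + 2 - (r + 1) - 2 = M - r - 2 + 1 by ring, h2,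
      show M + 1 - (r + 1) - 1 = M - r - 1 by ring,
      show M + 1 - (r + 1) - 2 = M - r - 2 by ring]
    ring

lemma dd_zero (r : ℕ) : dd (r + 1) 0 = 0 := by
  simp only [dd]
  have e1 : (0 : ℤ) - r - 1 = -((r + 1 : ℕ) : ℤ) := by push_cast; ring
  have e2 : (0 : ℤ) - r - 2 = -((r + 2 : ℕ) : ℤ) := by push_cast; ring
  rw [e1, e2, Ring.choose_neg, Ring.choose_neg]
  have e3 : ((r + 1 : ℕ) : ℤ) + ((r + 1 : ℕ) : ℤ) - 1 = ((2 * r + 1 : ℕ) : ℤ) := by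
    push_cast; ring
  have e4 : ((r + 2 : ℕ) : ℤ) + (r : ℤ) - 1 = ((2 * r + 1 : ℕ) : ℤ) := by
    push_cast; ring
  rw [e3, e4, Ring.choose_natCast, Ring.choose_natCast, Nat.choose_symm_half]
  simp [Int.negOnePow_succ, Units.smul_def]

open PowerSeries in
noncomputable def XX (M : ℤ) : PowerSeries ℤ := PowerSeries.mk (fun r => dd r M)

lemma XX_rec (M : ℤ) : XX (M + 2) = XX (M + 1) + PowerSeries.X * XX M := by
  ext r
  rcases r with _ | r
  · simp [XX, dd]
  · simp [XX, PowerSeries.coeff_succ_X_mul, dd_rec]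

lemma XX_zero : XX 0 = 1 := by
  ext r
  rcases r with _ | r
  · simp [XX, dd]
  · simp [XX, dd_zero, PowerSeries.coeff_one]

lemma XX_step (M : ℤ) : (1 + 2 * PowerSeries.X) * XX M =
    XX (M + 2) + PowerSeries.X ^ 2 * XX (M - 2) := by
  have h1 := XX_rec M
  have h2 := XX_rec (M - 1)
  have h3 := XX_rec (M - 2)
  rw [show M - 1 + 2 = M + 1 by ring, show M - 1 + 1 = M by ring] at h2
  rw [show M - 2 + 2 = M by ring, show M - 2 + 1 = M - 1 by ring] at h3
  linear_combination -h1 - h2 + PowerSeries.X * h3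

lemma XX_pow (N : ℕ) (M : ℤ) : (1 + 2 * PowerSeries.X) ^ N * XX M =
    ∑ a ∈ Finset.range (N + 1), (N.choose a : PowerSeries ℤ) * PowerSeries.X ^ (2 * a) *
      XX (M + 2 * N - 4 * a) := by
  induction N generalizing M with
  | zero => simp
  | succ N ih =>
    rw [pow_succ, mul_assoc, XX_step, mul_add, mul_left_comm, ih, ih]
    rw [Finset.sum_range_succ' _ (N + 1)]
    simp only [Nat.choose_succ_succ, Nat.cast_add, add_mul, Finset.sum_add_distrib]
    have h := Finset.sum_range_succ' (fun a => (N.choose a : PowerSeries ℤ) *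
      PowerSeries.X ^ (2 * a) * XX (M + 2 + 2 * N - 4 * a)) (N + 1)
    rw [Finset.sum_range_succ] at h
    simp only [Nat.choose_succ_self, Nat.cast_zero, zero_mul, add_zero] at h
    rw [h, Finset.mul_sum]
    have h5 : ∀ a : ℕ, M - 2 + 2 * (N : ℤ) - 4 * a = M + 2 * ((N : ℤ) + 1) - 4 * ((a : ℤ) + 1) := by
      intro a; ring
    have h6 : ∀ z : ℤ, M + 2 + 2 * (N : ℤ) - z = M + 2 * ((N : ℤ) + 1) - z := by
      intro a; ring
    simp only [h5, h6]
    push_cast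
    have h7 : ∀ a : ℕ, (PowerSeries.X : PowerSeries ℤ) ^ (2 * (a + 1)) =
      PowerSeries.X ^ 2 * PowerSeries.X ^ (2 * a) := by intro a; ring
    simp only [h7]
    have h8 : ∀ a : ℕ, (N.choose a : PowerSeries ℤ) * (PowerSeries.X ^ 2 * PowerSeries.X ^ (2 * a)) *
      XX (M + 2 * ((N : ℤ) + 1) - 4 * ((a : ℤ) + 1)) = PowerSeries.X ^ 2 * ((N.choose a : PowerSeries ℤ) * PowerSeries.X ^ (2 * a) *
      XX (M + 2 * ((N : ℤ) + 1) - 4 * ((a : ℤ) + 1))) := by intro a; ring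
    simp only [h8]
    simp
    ring

lemma key (N L : ℕ) (hL : L ≤ N) : (2 : ℤ) ^ L * (N.choose L : ℤ) =
    ∑ a ∈ Finset.range (L / 2 + 1), (N.choose a : ℤ) * dd (L - 2 * a) (2 * N - 4 * a) := by
  have h := congrArg (PowerSeries.coeff L) (XX_pow N 0)
  rw [XX_zero, mul_one, map_sum] at h
  have hl : PowerSeries.coeff L ((1 + 2 * PowerSeries.X : PowerSeries ℤ) ^ N) =
      (2 : ℤ) ^ L * (N.choose L : ℤ) := by
    have e : (1 + 2 * PowerSeries.X : PowerSeries ℤ) ^ N =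
        (((1 + Polynomial.C 2 * Polynomial.X) ^ N : Polynomial ℤ) : PowerSeries ℤ) := by
      have e0 : ((2 : Polynomial ℤ) : PowerSeries ℤ) = 2 :=
        map_ofNat (Polynomial.coeToPowerSeries.ringHom (R := ℤ)) 2
      simp [e0]
    rw [e, Polynomial.coeff_coe]
    have e2 : ((1 + Polynomial.C 2 * Polynomial.X) ^ N : Polynomial ℤ) =
      (((1 + Polynomial.X) ^ N : Polynomial ℤ)).comp (Polynomial.C 2 * Polynomial.X) := by simp
    rw [e2, Polynomial.comp_C_mul_X_coeff, Polynomial.coeff_one_add_X_pow]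
    ring
  rw [hl] at h
  rw [h]
  symm
  have hc : ∀ a : ℕ, PowerSeries.coeff L ((N.choose a : PowerSeries ℤ) * PowerSeries.X ^ (2 * a) *
      XX (0 + 2 * N - 4 * a)) = if 2 * a ≤ L then (N.choose a : ℤ) * dd (L - 2 * a) (2 * N - 4 * a)
        else 0 := by
    intro a
    rw [mul_assoc, ← map_natCast (PowerSeries.C (R := ℤ)), PowerSeries.coeff_C_mul,
      PowerSeries.coeff_X_pow_mul']
    simp [XX]
  simp only [hc]
  rw [← Finset.sum_filter]
  apply Finset.sum_congr _ (fun _ _ => rfl)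
  ext a
  simp only [Finset.mem_range, Finset.mem_filter]
  omega

/-- value of the coefficient -/
lemma dd_val (n l m : ℕ) (hm : m < l) (hl : l ≤ n) :
    2 * ((n : ℝ) - (m : ℝ)) / (2 * (n : ℝ) - (l : ℝ) - (m : ℝ)) *
            ((2 * n - l - m).choose (l - m) : ℝ) = (dd (l - m) (2 * n - 2 * m) : ℝ) := by
  obtain ⟨r, rfl⟩ : ∃ r, l = m + r + 1 := ⟨l - m - 1, by omega⟩
  obtain ⟨s, rfl⟩ : ∃ s, n = m + r + 1 + s := ⟨n - (m + r + 1), by omega⟩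
  have e1 : 2 * (m + r + 1 + s) - (m + r + 1) - m = (r + 2 * s) + 1 := by omega
  have e2 : m + r + 1 - m = r + 1 := by omega
  rw [e1, e2]
  simp only [dd]
  have e3 : (2 * ((m + r + 1 + s : ℕ) : ℤ) - 2 * m - r - 1) = ((r + 2 * s + 1 : ℕ) : ℤ) := by
    push_cast; ring
  have e4 : (2 * ((m + r + 1 + s : ℕ) : ℤ) - 2 * m - r - 2) = ((r + 2 * s : ℕ) : ℤ) := by
    push_cast; ring
  rw [e3, e4, Ring.choose_natCast, Ring.choose_natCast]
  have h := Nat.add_one_mul_choose_eq (r + 2 * s) r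
  have h' : ((r : ℝ) + 2 * s + 1) * ((r + 2 * s).choose r : ℝ) =
    ((r + 2 * s + 1).choose (r + 1) : ℝ) * (r + 1) := by exact_mod_cast h
  have hp : ((r : ℝ) + 2 * s + 1) ≠ 0 := by positivity
  push_cast
  rw [show 2 * ((m : ℝ) + r + 1 + s) - (m + r + 1) - m = r + 2 * s + 1 by ring]
  field_simp
  linear_combination -h'

noncomputable def EE (n k : ℕ) (q : Fin n → ℝ) : ℝ :=
  ∑ J : Finset (Fin n), ∑ ε : {x // x ∈ J} → Bool,
    if J.card = k then
        Real.cosh (∑ j : {x // x ∈ J}, if ε j then q j.1 else -(q j.1))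
    else 0

lemma Kfam_eq (n m : ℕ) (q : Fin n → ℝ) : Kfam n m q =
    ∑ a ∈ Finset.range (m / 2 + 1),
      (-1 : ℝ) ^ m * ((n - (m - 2 * a)).choose a : ℝ) * EE n (m - 2 * a) q := by
  simp only [Kfam, EE, Finset.mul_sum, mul_ite, mul_zero, mul_assoc]

lemma Hfam_eq (n l : ℕ) (q : Fin n → ℝ) : Hfam n l q =
    ∑ k ∈ Finset.range (l + 1),
      (-2 : ℝ) ^ (l - k) * ((n - k).choose (l - k) : ℝ) * EE n k q := by
  simp only [Hfam, EE, Finset.mul_sum, mul_ite, mul_zero]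
  rw [Finset.sum_comm]
  apply Finset.sum_congr rfl
  intro J _
  rw [Finset.sum_comm]
  apply Finset.sum_congr rfl
  intro ε _
  simp [Finset.sum_ite_eq, Nat.lt_succ_iff]

/-- Proposition 2.19 of the thesis: `(-1)^l 𝓗_l` is an explicit linear combination of
`𝓚_0, …, 𝓚_l`. -/
theorem stmt6 (n l : ℕ) (hn : 1 ≤ n) (hl : 1 ≤ l) (hln : l ≤ n) (q : Fin n → ℝ) :
    (-1 : ℝ) ^ l * Hfam n l q =
      Kfam n l q +
        ∑ m ∈ Finset.range l,
          2 * ((n : ℝ) - (m : ℝ)) / (2 * (n : ℝ) - (l : ℝ) - (m : ℝ)) *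
            ((2 * n - l - m).choose (l - m) : ℝ) * Kfam n m q := by
  have hR : Kfam n l q +
        ∑ m ∈ Finset.range l,
          2 * ((n : ℝ) - (m : ℝ)) / (2 * (n : ℝ) - (l : ℝ) - (m : ℝ)) *
            ((2 * n - l - m).choose (l - m) : ℝ) * Kfam n m q =
      ∑ m ∈ Finset.range (l + 1), (dd (l - m) (2 * n - 2 * m) : ℝ) * Kfam n m q := by
    rw [Finset.sum_range_succ, add_comm]
    congr 1
    · apply Finset.sum_congr rfl
      intro m hm
      rw [dd_val n l m (Finset.mem_range.1 hm) hln]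
    · simp [dd]
  rw [hR, Hfam_eq, Finset.mul_sum]
  have hL : ∀ k ∈ Finset.range (l + 1),
      (-1 : ℝ) ^ l * ((-2 : ℝ) ^ (l - k) * ((n - k).choose (l - k) : ℝ) * EE n k q) =
      ∑ a ∈ Finset.range ((l - k) / 2 + 1), (-1 : ℝ) ^ k * ((n - k).choose a : ℝ) *
        (dd (l - (k + 2 * a)) (2 * n - 2 * ((k + 2 * a : ℕ) : ℤ)) : ℝ) * EE n k q := by
    intro k hk
    have hk' : k ≤ l := Nat.lt_succ_iff.1 (Finset.mem_range.1 hk)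
    have h := congrArg (fun z : ℤ => (z : ℝ)) (key (n - k) (l - k) (by omega))
    simp only [Int.cast_mul, Int.cast_pow, Int.cast_sum, Int.cast_natCast, Int.cast_ofNat] at h
    have hs : (-1 : ℝ) ^ l * (-2 : ℝ) ^ (l - k) = (-1) ^ k * 2 ^ (l - k) := by
      obtain ⟨r, rfl⟩ := Nat.exists_eq_add_of_le hk'
      rw [Nat.add_sub_cancel_left, pow_add, mul_assoc, ← mul_pow]
      norm_num
    calc _ = ((-1 : ℝ) ^ l * (-2 : ℝ) ^ (l - k)) * ((n - k).choose (l - k) : ℝ) * EE n k q := by ring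
      _ = (-1) ^ k * (2 ^ (l - k) * ((n - k).choose (l - k) : ℝ)) * EE n k q := by rw [hs]; ring
      _ = _ := by
        rw [h, Finset.mul_sum, Finset.sum_mul]
        apply Finset.sum_congr rfl
        intro a _
        rw [Nat.sub_sub, Nat.cast_sub (by omega : k ≤ n),
          show 2 * ((n : ℤ) - k) - 4 * a = 2 * n - 2 * ((k + 2 * a : ℕ) : ℤ) by push_cast; ring]
        ring
  rw [Finset.sum_congr rfl hL]
  simp only [Kfam_eq, Finset.mul_sum]
  rw [Finset.sum_sigma', Finset.sum_sigma']
  refine Finset.sum_bij' (fun x _ => ⟨x.1 + 2 * x.2, x.2⟩) (fun x _ => ⟨x.1 - 2 * x.2, x.2⟩)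
    ?_ ?_ ?_ ?_ ?_
  · rintro ⟨k, a⟩ h
    simp only [Finset.mem_sigma, Finset.mem_range] at h ⊢
    omega
  · rintro ⟨k, a⟩ h
    simp only [Finset.mem_sigma, Finset.mem_range] at h ⊢
    omega
  · rintro ⟨k, a⟩ h
    simp
  · rintro ⟨k, a⟩ h
    simp only [Finset.mem_sigma, Finset.mem_range] at h
    simp only [Sigma.mk.injEq, heq_eq_eq, and_true]
    omega
  · rintro ⟨k, a⟩ h
    simp only [Nat.add_sub_cancel]
    rw [pow_add, pow_mul]
    norm_num
    ring
end

section
/- For all integers n ≥ 1 and 0 ≤ l ≤ n and every q ∈ ℝⁿ, 𝓗_l^{(n)}(q) = 4^l · e_l( sinh²(q₁/2), …, sinh²(q_n/2) ), where e_l denotes the l-th elementary symmetric polynomial in n variables (with e₀ = 1). -/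
theorem aux_exp (ι : Type) [Fintype ι] [DecidableEq ι] (f : ι → ℝ) :
    ∑ ε : ι → Bool, Real.exp (∑ j, if ε j then f j else -(f j)) =
      ∏ j, (2 * Real.cosh (f j)) := by
  have h : ∀ j, 2 * Real.cosh (f j) = ∑ b : Bool, Real.exp (if b then f j else -(f j)) := by
    intro j
    rw [Fintype.sum_bool, Real.cosh_eq]
    simp
    ring
  simp_rw [h, Real.exp_sum]
  rw [Finset.prod_univ_sum, Fintype.piFinset_univ]

theorem aux_cosh (ι : Type) [Fintype ι] [DecidableEq ι] (f : ι → ℝ) :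
    ∑ ε : ι → Bool, Real.cosh (∑ j, if ε j then f j else -(f j)) =
      ∏ j, (2 * Real.cosh (f j)) := by
  have h2 := aux_exp ι (fun j => -(f j))
  have h1 := aux_exp ι f
  simp only [Real.cosh_neg] at h2
  have h3 : ∀ ε : ι → Bool, (∑ j, if ε j then -(f j) else -(-(f j))) =
      -(∑ j, if ε j then f j else -(f j)) := by
    intro ε
    rw [← Finset.sum_neg_distrib]
    refine Finset.sum_congr rfl fun j _ => ?_
    split_ifs <;> rfl
  simp only [h3] at h2
  simp only [Real.cosh_eq]
  rw [← Finset.sum_div, Finset.sum_add_distrib, h1, h2]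
  simp only [Real.cosh_eq]
  ring

theorem aux_count (n l : ℕ) (J : Finset (Fin n)) (hJ : J.card ≤ l) :
    ((Finset.powersetCard l (Finset.univ : Finset (Fin n))).filter (fun K => J ⊆ K)).card =
      (n - J.card).choose (l - J.card) := by
  have h : n - J.card = (Finset.univ \ J).card := by
    rw [Finset.card_sdiff_of_subset (Finset.subset_univ J)]; simp
  rw [h, ← Finset.card_powersetCard]
  refine Finset.card_bij' (fun K _ => K \ J) (fun K _ => K ∪ J) ?_ ?_ ?_ ?_
  · intro K hK
    simp only [Finset.mem_filter, Finset.mem_powersetCard] at hK ⊢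
    refine ⟨Finset.sdiff_subset_sdiff (Finset.subset_univ _) subset_rfl, ?_⟩
    rw [Finset.card_sdiff_of_subset hK.2, hK.1.2]
  · intro K hK
    simp only [Finset.mem_filter, Finset.mem_powersetCard] at hK ⊢
    have hd : Disjoint K J := Finset.disjoint_of_subset_left hK.1 Finset.sdiff_disjoint
    refine ⟨⟨Finset.subset_univ _, ?_⟩, Finset.subset_union_right⟩
    rw [Finset.card_union_of_disjoint hd, hK.2]
    omega
  · intro K hK
    simp only [Finset.mem_filter] at hK
    exact Finset.sdiff_union_of_subset hK.2
  · intro K hK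
    simp only [Finset.mem_powersetCard] at hK
    have hd : Disjoint K J := Finset.disjoint_of_subset_left hK.1 Finset.sdiff_disjoint
    exact Finset.union_sdiff_cancel_right hd

/-- Proposition B.1 of the thesis (due to van Diejen): `𝓗_l^{(n)}(q)` equals
`4^l` times the `l`-th elementary symmetric function of `sinh²(q_i/2)`. -/
theorem stmt7 (n l : ℕ) (hn : 1 ≤ n) (hl : l ≤ n) (q : Fin n → ℝ) :
    Hfam n l q =
      4 ^ l * ∑ J ∈ Finset.powersetCard l (Finset.univ : Finset (Fin n)),
        ∏ j ∈ J, Real.sinh (q j / 2) ^ 2 := by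
  have hs : ∀ x : ℝ, 4 * Real.sinh (x / 2) ^ 2 = 2 * Real.cosh x + (-2) := by
    intro x
    have h1 := Real.cosh_two_mul (x / 2)
    have h2 := Real.cosh_sq (x / 2)
    rw [mul_div_cancel₀ x (two_ne_zero)] at h1
    rw [h1, h2]; ring
  have hR : 4 ^ l * ∑ J ∈ Finset.powersetCard l (Finset.univ : Finset (Fin n)),
        ∏ j ∈ J, Real.sinh (q j / 2) ^ 2 =
      ∑ K ∈ Finset.powersetCard l (Finset.univ : Finset (Fin n)), ∑ J : Finset (Fin n),
        if J ⊆ K then (-2 : ℝ) ^ (l - J.card) * ∏ j ∈ J, (2 * Real.cosh (q j)) else 0 := by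
    rw [Finset.mul_sum]
    refine Finset.sum_congr rfl fun K hK => ?_
    rw [Finset.mem_powersetCard] at hK
    rw [← hK.2, ← Finset.prod_const, ← Finset.prod_mul_distrib]
    simp only [hs]
    rw [Finset.prod_add, ← Finset.sum_filter]
    refine Finset.sum_congr (by ext; simp) fun J hJ => ?_
    simp only [Finset.mem_filter, Finset.mem_univ, true_and] at hJ
    rw [Finset.prod_const, Finset.card_sdiff_of_subset hJ, mul_comm]
  rw [hR, Finset.sum_comm, Hfam]
  refine Finset.sum_congr rfl fun J _ => ?_
  rw [← Finset.sum_filter (fun K => J ⊆ K), Finset.sum_const, nsmul_eq_mul]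
  split_ifs with h
  · rw [← Finset.mul_sum, aux_cosh _ (fun j : {x // x ∈ J} => q j.1), aux_count n l J h,
      Finset.prod_coe_sort J (fun j => 2 * Real.cosh (q j))]
    ring
  · have he : (Finset.powersetCard l (Finset.univ : Finset (Fin n))).filter (fun K => J ⊆ K) = ∅ := by
      refine Finset.filter_eq_empty_iff.mpr fun K hK hJK => h ?_
      rw [← (Finset.mem_powersetCard.mp hK).2]
      exact Finset.card_le_card hJK
    rw [he]; simp
end

section
/- Let x be a nonzero real number, n ≥ 2 an integer, and p̂ ∈ ℝⁿ with 0 ≥ p̂₁ ≥ p̂₂ ≥ … ≥ p̂_n. Suppose there exist a unitary n×n matrix T and a vector w ∈ ℂⁿ such that E₂ₓ + sgn(x) · E (w w*) E = T⁻¹ E₂ T, where E = diag(e^{p̂₁},…,e^{p̂_n}), E₂ = diag(e^{2p̂₁},…,e^{2p̂_n}) and E₂ₓ = diag(e^{2p̂₁−x},…,e^{2p̂_n−x}). Then p̂_k − p̂_{k+1} ≥ |x|/2 for every k = 1,…,n−1; in particular the components p̂₁,…,p̂_n are pairwise distinct. -/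
open Matrix in
theorem exists_vec_aux (n : ℕ) (M N : Matrix (Fin n) (Fin n) ℂ) (u : Fin n → ℂ) (k : ℕ)
    (hk : k + 1 < n) : ∃ y : Fin n → ℂ, y ≠ 0 ∧ (∀ i : Fin n, i.val < k → (M *ᵥ y) i = 0) ∧
      (∀ i : Fin n, k + 1 < i.val → (N *ᵥ y) i = 0) ∧ u ⬝ᵥ y = 0 := by
  let L : Matrix (Fin n) (Fin n) ℂ := fun i =>
    if i.val < k then M i else if i.val = k then u else if i.val = k + 1 then 0 else N i
  have hns : ¬ Function.Surjective L.mulVecLin := by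
    intro h
    obtain ⟨y, hy⟩ := h (Pi.single ⟨k+1, hk⟩ 1)
    have h1 : L ⟨k+1, hk⟩ ⬝ᵥ y = (Pi.single ⟨k+1, hk⟩ 1 : Fin n → ℂ) ⟨k+1, hk⟩ :=
      congrFun hy ⟨k+1, hk⟩
    simp [L] at h1
  have hni : ¬ Function.Injective L.mulVecLin := fun h =>
    hns (LinearMap.injective_iff_surjective.mp h)
  rw [← LinearMap.ker_eq_bot, Submodule.eq_bot_iff] at hni
  push Not at hni
  obtain ⟨y, hy, hy0⟩ := hni
  have hy' : ∀ i, L i ⬝ᵥ y = 0 := fun i => congrFun (LinearMap.mem_ker.mp hy) i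
  refine ⟨y, hy0, fun i hi => ?_, fun i hi => ?_, ?_⟩
  · have := hy' i
    change M i ⬝ᵥ y = 0
    simpa [L, hi] using this
  · have := hy' i
    have h1 : ¬ i.val < k := by omega
    have h2 : ¬ i.val = k := by omega
    have h3 : ¬ i.val = k + 1 := by omega
    change N i ⬝ᵥ y = 0
    simpa [L, h1, h2, h3] using this
  · simpa [L] using hy' ⟨k, by omega⟩

open Matrix in
theorem key_aux (n : ℕ) (b a : Fin n → ℝ) (s : ℂ) (c : Fin n → ℂ) (w : Fin n → ℂ)
    (T : Matrix (Fin n) (Fin n) ℂ) (hT : T ∈ Matrix.unitaryGroup (Fin n) ℂ)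
    (heq : Matrix.diagonal (fun j => ((b j : ℝ) : ℂ)) +
        s • (Matrix.diagonal c * Matrix.vecMulVec w (star w) * Matrix.diagonal c) =
      T⁻¹ * Matrix.diagonal (fun j => ((a j : ℝ) : ℂ)) * T)
    (y : Fin n → ℂ) (hy : (fun j => star (w j) * c j) ⬝ᵥ y = 0) :
    ∑ j, b j * ‖y j‖ ^ 2 = ∑ j, a j * ‖(T *ᵥ y) j‖ ^ 2 ∧
      ∑ j, ‖y j‖ ^ 2 = ∑ j, ‖(T *ᵥ y) j‖ ^ 2 := by
  have hTT : Tᴴ * T = 1 := (Matrix.mem_unitaryGroup_iff'.mp hT)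
  have hinv : T⁻¹ = Tᴴ := Matrix.inv_eq_left_inv hTT
  have quad : ∀ (d : Fin n → ℝ) (z : Fin n → ℂ),
      star z ⬝ᵥ (Matrix.diagonal (fun j => ((d j : ℝ) : ℂ)) *ᵥ z)
        = ((∑ j, d j * ‖z j‖ ^ 2 : ℝ) : ℂ) := by
    intro d z
    simp only [dotProduct, Matrix.mulVec_diagonal, Pi.star_apply]
    push_cast
    refine Finset.sum_congr rfl fun j _ => ?_
    rw [← Complex.conj_mul', RCLike.star_def]
    ring
  have h0 : (Matrix.diagonal c * Matrix.vecMulVec w (star w) * Matrix.diagonal c) *ᵥ y = 0 := by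
    have : star w ⬝ᵥ (Matrix.diagonal c *ᵥ y) = 0 := by
      rw [← hy]
      simp [dotProduct, Matrix.mulVec_diagonal, mul_assoc]
    rw [← Matrix.mulVec_mulVec, ← Matrix.mulVec_mulVec, Matrix.vecMulVec_mulVec, this]
    simp
  have conjT : ∀ D : Matrix (Fin n) (Fin n) ℂ,
      star y ⬝ᵥ ((Tᴴ * D * T) *ᵥ y) = star (T *ᵥ y) ⬝ᵥ (D *ᵥ (T *ᵥ y)) := by
    intro D
    rw [Matrix.star_mulVec, ← Matrix.dotProduct_mulVec, Matrix.mulVec_mulVec,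
      Matrix.mulVec_mulVec, Matrix.mul_assoc]
  constructor
  · have h := congrArg (fun A => star y ⬝ᵥ (A *ᵥ y)) heq
    simp only [Matrix.add_mulVec, Matrix.smul_mulVec, h0, smul_zero, add_zero, hinv, conjT,
      quad] at h
    exact_mod_cast h
  · have h := conjT (Matrix.diagonal (fun j => (((1 : Fin n → ℝ) j : ℝ) : ℂ)))
    have h1 : (Matrix.diagonal (fun j => (((1 : Fin n → ℝ) j : ℝ) : ℂ))
      : Matrix (Fin n) (Fin n) ℂ) = 1 := by simp
    rw [quad, h1, Matrix.mul_one, hTT, ← h1, quad] at h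
    simp only [Pi.one_apply, one_mul] at h
    exact_mod_cast h

/-- If `f ≤ c` on the support of `y` and `c' ≤ g` on the support of `z`, compare. -/
theorem compare_aux (n : ℕ) (f g : Fin n → ℝ) (y z : Fin n → ℂ) (c d : ℝ) (hy : y ≠ 0)
    (h1 : ∑ j, f j * ‖y j‖ ^ 2 = ∑ j, g j * ‖z j‖ ^ 2)
    (h2 : ∑ j, ‖y j‖ ^ 2 = ∑ j, ‖z j‖ ^ 2)
    (hf : ∀ j, y j = 0 ∨ f j ≤ c) (hg : ∀ j, z j = 0 ∨ d ≤ g j) : d ≤ c := by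
  have hpos : 0 < ∑ j, ‖y j‖ ^ 2 := by
    obtain ⟨i, hi⟩ := Function.ne_iff.mp hy
    have hi' : y i ≠ 0 := hi
    exact Finset.sum_pos' (fun j _ => by positivity) ⟨i, Finset.mem_univ _, by positivity⟩
  have a1 : ∑ j, f j * ‖y j‖ ^ 2 ≤ c * ∑ j, ‖y j‖ ^ 2 := by
    rw [Finset.mul_sum]
    refine Finset.sum_le_sum fun j _ => ?_
    rcases hf j with h | h
    · simp [h]
    · gcongr
  have a2 : d * ∑ j, ‖z j‖ ^ 2 ≤ ∑ j, g j * ‖z j‖ ^ 2 := by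
    rw [Finset.mul_sum]
    refine Finset.sum_le_sum fun j _ => ?_
    rcases hg j with h | h
    · simp [h]
    · gcongr
  rw [← h2, ← h1] at a2
  exact le_of_mul_le_mul_right (a2.trans a1) hpos

/-- Proposition 3.2 of the thesis: the momentum map constraint forces the `p̂`-variables
into the closed polyhedron `C̄ₓ`; in particular the `p̂_j` are pairwise distinct. -/
theorem stmt10 (x : ℝ) (hx : x ≠ 0) (n : ℕ) (hn : 2 ≤ n) (p : Fin n → ℝ)
    (hp0 : p ⟨0, by omega⟩ ≤ 0) (hmono : ∀ i j : Fin n, i ≤ j → p j ≤ p i)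
    (T : Matrix (Fin n) (Fin n) ℂ) (hT : T ∈ Matrix.unitaryGroup (Fin n) ℂ)
    (w : Fin n → ℂ)
    (heq : Matrix.diagonal (fun j => ((Real.exp (2 * p j - x) : ℝ) : ℂ)) +
        ((Real.sign x : ℝ) : ℂ) •
          (Matrix.diagonal (fun j => ((Real.exp (p j) : ℝ) : ℂ)) *
            Matrix.vecMulVec w (star w) *
            Matrix.diagonal (fun j => ((Real.exp (p j) : ℝ) : ℂ))) =
      T⁻¹ * Matrix.diagonal (fun j => ((Real.exp (2 * p j) : ℝ) : ℂ)) * T) :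
    (∀ (k : ℕ) (hk : k + 1 < n), |x| / 2 ≤ p ⟨k, by omega⟩ - p ⟨k + 1, hk⟩) ∧
      Function.Injective p := by
  have gap : ∀ (k : ℕ) (hk : k + 1 < n), |x| / 2 ≤ p ⟨k, by omega⟩ - p ⟨k + 1, hk⟩ := by
    intro k hk
    rcases lt_or_gt_of_ne hx with hneg | hpos
    · obtain ⟨y, hy0, hM, hN, hu⟩ := exists_vec_aux n T 1
        (fun j => star (w j) * ((Real.exp (p j) : ℝ) : ℂ)) k hk
      obtain ⟨e1, e2⟩ := key_aux n _ _ _ _ w T hT heq y hu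
      have hz : T.mulVec y ≠ 0 := by
        intro h
        apply hy0
        have hTT := Matrix.mem_unitaryGroup_iff'.mp hT
        have := congrArg (fun v => (star T).mulVec v) h
        simpa [Matrix.mulVec_mulVec, hTT] using this
      have := compare_aux n _ _ (T.mulVec y) y (Real.exp (2 * p ⟨k, by omega⟩))
        (Real.exp (2 * p ⟨k + 1, hk⟩ - x)) hz e1.symm e2.symm
        (fun j => by
          by_cases h : j.val < k
          · exact Or.inl (hM j h)
          · right
            have := hmono ⟨k, by omega⟩ j (Fin.le_def.mpr (by simpa using h))
            exact Real.exp_le_exp.mpr (by linarith))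
        (fun j => by
          by_cases h : k + 1 < j.val
          · exact Or.inl (by simpa using hN j h)
          · right
            have := hmono j ⟨k + 1, hk⟩ (Fin.le_def.mpr (by simpa using h))
            exact Real.exp_le_exp.mpr (by linarith))
      rw [Real.exp_le_exp] at this
      rw [abs_of_neg hneg]
      linarith
    · obtain ⟨y, hy0, hM, hN, hu⟩ := exists_vec_aux n 1 T
        (fun j => star (w j) * ((Real.exp (p j) : ℝ) : ℂ)) k hk
      obtain ⟨e1, e2⟩ := key_aux n _ _ _ _ w T hT heq y hu
      have := compare_aux n _ _ y (T.mulVec y) (Real.exp (2 * p ⟨k, by omega⟩ - x))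
        (Real.exp (2 * p ⟨k + 1, hk⟩)) hy0 e1 e2
        (fun j => by
          by_cases h : j.val < k
          · exact Or.inl (by simpa using hM j h)
          · right
            have := hmono ⟨k, by omega⟩ j (Fin.le_def.mpr (by simpa using h))
            exact Real.exp_le_exp.mpr (by linarith))
        (fun j => by
          by_cases h : k + 1 < j.val
          · exact Or.inl (hN j h)
          · right
            have := hmono j ⟨k + 1, hk⟩ (Fin.le_def.mpr (by simpa using h))
            exact Real.exp_le_exp.mpr (by linarith))
      rw [Real.exp_le_exp] at this
      rw [abs_of_pos hpos]
      linarith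
  refine ⟨gap, ?_⟩
  have hlt : ∀ i j : Fin n, i < j → p j < p i := by
    intro i j hij
    have hij' : i.val < j.val := hij
    have hk : i.val + 1 < n := by have := j.isLt; omega
    have h1 := gap i.val hk
    have h2 := hmono ⟨i.val + 1, hk⟩ j (Fin.le_def.mpr hij')
    have h3 := abs_pos.mpr hx
    have h4 : p ⟨i.val, by omega⟩ = p i := rfl
    linarith
  intro i j hij
  rcases lt_trichotomy i j with h | h | h
  · exact absurd hij (hlt i j h).ne'
  · exact h
  · exact absurd hij (hlt j i h).ne
end

section
/- For every nonzero real number x and every integer n ≥ 1, let ν(x) be the n×n upper triangular real matrix with ν(x)_{jj} = 1, ν(x)_{jk} = (1 − e^{−x})·e^{(k−j)x/2} for j < k, and ν(x)_{jk} = 0 for j > k, and let v̂(x) ∈ ℝⁿ have components v̂(x)_j = √(sgn(x)(e^x − 1)) · e^{(n−1−j)x/2} for j = 1,…,n (note sgn(x)(e^x − 1) > 0). Then ν(x)·ν(x)ᵀ = e^{−x}·1_n + sgn(x)·v̂(x)·v̂(x)ᵀ. -/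
/-- Entries of the matrix, with natural number indices. -/
noncomputable def nuEntry (x : ℝ) (i k : ℕ) : ℝ :=
  if i = k then 1
  else if i < k then (1 - Real.exp (-x)) * Real.exp (((k : ℝ) - (i : ℝ)) * x / 2)
  else 0

lemma nuEntry_sum (x : ℝ) (i j m : ℕ) :
    ∑ k ∈ Finset.range m, nuEntry x i k * nuEntry x j k =
      if i < m ∧ j < m then
        (if i = j then Real.exp (-x) else 0) +
          (1 - Real.exp (-x)) * Real.exp ((2 * (m : ℝ) - 2 - i - j) * x / 2)
      else 0 := by
  induction m with
  | zero => simp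
  | succ m ih =>
    rw [Finset.sum_range_succ, ih]
    rcases lt_trichotomy i m with hi | hi | hi
    · rcases lt_trichotomy j m with hj | hj | hj
      · rw [if_pos ⟨hi, hj⟩, if_pos (show i < m + 1 ∧ j < m + 1 by omega)]
        simp only [nuEntry, if_neg hi.ne, if_neg hj.ne, if_pos hi, if_pos hj]
        have e1 : Real.exp ((2 * (m : ℝ) - 2 - i - j) * x / 2) =
            Real.exp (-x) * (Real.exp (((m : ℝ) - i) * x / 2) *
              Real.exp (((m : ℝ) - j) * x / 2)) := by
          rw [← Real.exp_add, ← Real.exp_add]; congr 1; ring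
        have e2 : Real.exp ((2 * ((m + 1 : ℕ) : ℝ) - 2 - i - j) * x / 2) =
            (Real.exp (((m : ℝ) - i) * x / 2) * Real.exp (((m : ℝ) - j) * x / 2)) := by
          rw [← Real.exp_add]; congr 1; push_cast; ring
        rw [e1, e2]; ring
      · subst hj
        rw [if_neg (by omega), if_pos ⟨by omega, by omega⟩, if_neg hi.ne]
        simp only [nuEntry, if_neg hi.ne, if_pos hi, if_true]
        rw [zero_add, zero_add, mul_one]; congr 2; push_cast; ring
      · rw [if_neg (by omega), if_neg (by omega)]
        simp [nuEntry, hj.ne', hj.not_gt]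
    · subst hi
      rcases lt_trichotomy j i with hj | hj | hj
      · rw [if_neg (by omega), if_pos ⟨by omega, by omega⟩, if_neg hj.ne']
        simp only [nuEntry, if_neg hj.ne, if_pos hj, if_true]
        rw [zero_add, zero_add, one_mul]; congr 2; push_cast; ring
      · subst hj
        rw [if_neg (by omega), if_pos ⟨by omega, by omega⟩, if_pos rfl]
        simp only [nuEntry, if_true]
        have : (2 * ((j + 1 : ℕ) : ℝ) - 2 - j - j) * x / 2 = 0 := by push_cast; ring
        rw [this, Real.exp_zero]; ring
      · rw [if_neg (by omega), if_neg (by omega)]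
        simp [nuEntry, hj.ne', hj.not_gt]
    · rw [if_neg (by omega), if_neg (by omega)]
      simp [nuEntry, hi.ne', hi.not_gt]

/-- The identity (3.55) of the thesis: `ν(x) ν(x)ᵀ = e^{-x} 1 + sgn(x) v̂(x) v̂(x)ᵀ`. -/
theorem stmt12 (x : ℝ) (hx : x ≠ 0) (n : ℕ) (hn : 1 ≤ n) :
    let ν : Matrix (Fin n) (Fin n) ℝ :=
      Matrix.of fun i j =>
        if i = j then 1
        else if i < j then
          (1 - Real.exp (-x)) * Real.exp ((((j : ℕ) : ℝ) - ((i : ℕ) : ℝ)) * x / 2)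
        else 0
    let v : Fin n → ℝ := fun i =>
      Real.sqrt (Real.sign x * (Real.exp x - 1)) *
        Real.exp (((n : ℝ) - 1 - (((i : ℕ) : ℝ) + 1)) * x / 2)
    ν * ν.transpose =
      Real.exp (-x) • (1 : Matrix (Fin n) (Fin n) ℝ) +
        Real.sign x • Matrix.vecMulVec v v := by
  intro ν v
  ext i j
  have hs : Real.sign x * (Real.sign x * (Real.exp x - 1)) = Real.exp x - 1 ∧
      0 ≤ Real.sign x * (Real.exp x - 1) := by
    rcases lt_or_gt_of_ne hx with h | h
    · have := Real.exp_lt_one_iff.2 h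
      rw [Real.sign_of_neg h]; constructor <;> linarith
    · have := Real.one_lt_exp_iff.2 h
      rw [Real.sign_of_pos h]; constructor <;> linarith
  have hν : ∀ a b : Fin n, ν a b = nuEntry x a b := by
    intro a b
    simp only [ν, Matrix.of_apply, nuEntry, Fin.ext_iff, Fin.lt_def]
  have hL : (ν * ν.transpose) i j =
      ∑ k ∈ Finset.range n, nuEntry x i k * nuEntry x j k := by
    rw [Matrix.mul_apply, Finset.sum_range]
    simp only [Matrix.transpose_apply, hν]
  have hv : Real.sign x * (v i * v j) =
      (1 - Real.exp (-x)) * Real.exp ((2 * (n : ℝ) - 2 - (i : ℕ) - (j : ℕ)) * x / 2) := by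
    have e : Real.exp (((n : ℝ) - 1 - (((i : ℕ) : ℝ) + 1)) * x / 2) *
        Real.exp (((n : ℝ) - 1 - (((j : ℕ) : ℝ) + 1)) * x / 2) =
        Real.exp (-x) * Real.exp ((2 * (n : ℝ) - 2 - (i : ℕ) - (j : ℕ)) * x / 2) := by
      rw [← Real.exp_add, ← Real.exp_add]; congr 1; ring
    have e' : Real.exp x * Real.exp (-x) = 1 := by
      rw [← Real.exp_add, add_neg_cancel, Real.exp_zero]
    simp only [v]
    rw [mul_mul_mul_comm, Real.mul_self_sqrt hs.2, e, ← mul_assoc, hs.1, ← mul_assoc,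
      sub_mul, e', one_mul]
  rw [hL, nuEntry_sum, if_pos ⟨i.2, j.2⟩, ← hv]
  simp [Matrix.one_apply, Matrix.vecMulVec_apply, Fin.ext_iff]
end

section
/- Let v ∈ ℝ and let j ≥ 1 be an integer. There exist real numbers a₁,…,a_j, b₁,…,b_j, c₁,…,c_j, d₁,…,d_j, depending only on v and j, such that for every integer n ≥ 1 and every n×n complex matrix α, the j-th power of the 2n×2n block matrix 𝓛 = [[e^{−2v}·1_n, −e^{−v}·α],[e^{−v}·α*, e^{2v}·1_n − α*α]] has blocks (𝓛^j)₁₁ = Σ_{m=1}^{j} a_m·(αα*)^{j−m}, (𝓛^j)₁₂ = α·Σ_{m=1}^{j} b_m·(α*α)^{j−m}, (𝓛^j)₂₁ = α*·Σ_{m=1}^{j} c_m·(αα*)^{j−m}, and (𝓛^j)₂₂ = (−1)^j·(α*α)^j + Σ_{m=1}^{j} d_m·(α*α)^{j−m}. -/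
open Matrix

open Polynomial in
lemma stmt13_semiconj {n : ℕ} (α β : Matrix (Fin n) (Fin n) ℂ) (p : ℝ[X]) :
    aeval (α * β) p * α = α * aeval (β * α) p := by
  induction p using Polynomial.induction_on' with
  | add p q hp hq => simp only [map_add, add_mul, mul_add, hp, hq]
  | monomial k r =>
    have h : ∀ k : ℕ, (α * β) ^ k * α = α * (β * α) ^ k := by
      intro k
      induction k with
      | zero => simp
      | succ k ih => rw [pow_succ', mul_assoc, ih, pow_succ']; simp only [mul_assoc]
    simp only [aeval_monomial, ← Algebra.smul_def, smul_mul_assoc, mul_smul_comm, h]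

open Polynomial in
lemma stmt13_sum {n : ℕ} (M : Matrix (Fin n) (Fin n) ℂ) (p : ℝ[X]) (k : ℕ)
    (hp : p.natDegree ≤ k) :
    aeval M p = ∑ m ∈ Finset.range (k + 1),
      ((p.coeff (k - m) : ℝ) : ℂ) • M ^ (k + 1 - 1 - m) := by
  rw [aeval_eq_sum_range' (Nat.lt_succ_of_le hp), ← Finset.sum_range_reflect]
  apply Finset.sum_congr rfl
  intro m _
  simp [Complex.coe_smul]

open Polynomial in
lemma stmt13_poly (x y z : ℝ) (k : ℕ) :
    ∃ A B C D : ℝ[X], A.natDegree ≤ k ∧ B.natDegree ≤ k ∧ C.natDegree ≤ k ∧ D.natDegree ≤ k ∧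
      ∀ (n : ℕ) (α : Matrix (Fin n) (Fin n) ℂ),
        (Matrix.fromBlocks ((x : ℂ) • (1 : Matrix (Fin n) (Fin n) ℂ)) (-((y : ℂ) • α))
          ((y : ℂ) • αᴴ) ((z : ℂ) • (1 : Matrix (Fin n) (Fin n) ℂ) - αᴴ * α)) ^ (k + 1) =
        Matrix.fromBlocks (aeval (α * αᴴ) A) (α * aeval (αᴴ * α) B)
          (αᴴ * aeval (α * αᴴ) C) (aeval (αᴴ * α) ((-1) ^ (k + 1) * X ^ (k + 1) + D)) := by
  induction k with
  | zero =>
    refine ⟨Polynomial.C x, Polynomial.C (-y), Polynomial.C y, Polynomial.C z,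
      by simp, by simp, by simp, by simp, ?_⟩
    intro n α
    simp only [Complex.coe_smul]
    simp [Algebra.algebraMap_eq_smul_one]
    abel
  | succ k ih =>
    obtain ⟨A, B, C, D, hA, hB, hC, hD, h⟩ := ih
    have hX : ∀ p : ℝ[X], p.natDegree ≤ k → (X * p).natDegree ≤ k + 1 := fun p hp =>
      (natDegree_mul_le_of_le natDegree_X_le hp).trans (by omega)
    have hS : ∀ (r : ℝ) (p : ℝ[X]), p.natDegree ≤ k + 1 → (r • p).natDegree ≤ k + 1 :=
      fun r p hp => (natDegree_smul_le r p).trans hp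
    have hP : ((-1) ^ (k + 1) * X ^ (k + 1) : ℝ[X]).natDegree ≤ k + 1 := by
      compute_degree
    refine ⟨x • A + y • (X * B), (-y) • A + (z • B - X * B),
      x • C + y • ((-1) ^ (k + 1) * X ^ (k + 1) + D),
      (-y) • (X * C) + (z • D - X * D) + z • ((-1) ^ (k + 1) * X ^ (k + 1)), ?_, ?_, ?_, ?_, ?_⟩
    · exact natDegree_add_le_of_degree_le (hS _ _ (by omega)) (hS _ _ (hX _ hB))
    · exact natDegree_add_le_of_degree_le (hS _ _ (by omega))
        (natDegree_sub_le_of_le (hS _ _ (by omega)) (hX _ hB) |>.trans (by simp))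
    · exact natDegree_add_le_of_degree_le (hS _ _ (by omega))
        (hS _ _ (natDegree_add_le_of_degree_le hP (by omega)))
    · exact natDegree_add_le_of_degree_le (natDegree_add_le_of_degree_le (hS _ _ (hX _ hC))
        (natDegree_sub_le_of_le (hS _ _ (by omega)) (hX _ hD) |>.trans (by simp))) (hS _ _ hP)
    · intro n α
      rw [pow_succ, h n α, Matrix.fromBlocks_multiply]
      generalize hE : ((-1) ^ (k + 1) * X ^ (k + 1) + D : ℝ[X]) = E
      have hE' : ((-1) ^ (k + 1 + 1) * X ^ (k + 1 + 1) + ((-y) • (X * C) + (z • D - X * D)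
          + z • ((-1) ^ (k + 1) * X ^ (k + 1))) : ℝ[X]) = (-y) • (X * C) + (z • E - E * X) := by
        rw [← hE]
        simp only [smul_eq_C_mul]
        ring
      rw [hE']
      have e1 := stmt13_semiconj αᴴ α E
      have e2 := stmt13_semiconj α αᴴ B
      have e3 := stmt13_semiconj α αᴴ A
      have e4 := stmt13_semiconj α αᴴ C
      have e5 : αᴴ * α * aeval (αᴴ * α) B = aeval (αᴴ * α) B * (αᴴ * α) := by
        have := congrArg (aeval (αᴴ * α)) (mul_comm X B)
        simpa using this
      have e6 := stmt13_semiconj αᴴ α B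
      simp only [Complex.coe_smul]
      congr 1
      · simp only [map_add, map_smul, map_mul, aeval_X, mul_smul_comm, mul_one]
        rw [mul_assoc α, e6, mul_assoc]
      · simp only [map_add, map_sub, map_neg, map_smul, map_mul, aeval_X, mul_smul_comm, mul_one,
          mul_neg, mul_sub, mul_add, e3, e5, neg_smul, mul_assoc]
      · simp only [map_add, map_smul, mul_smul_comm, mul_one, e1, mul_add]
      · simp only [map_add, map_sub, map_neg, map_smul, map_mul, aeval_X, mul_smul_comm, mul_one,
          mul_neg, mul_sub, mul_add, neg_smul, mul_assoc, e4]

/-- Lemma C.7 of the thesis: the blocks of the `j`-th power of the reduced Lax-type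
matrix `𝓛` are polynomials in `αα*` resp. `α*α` with coefficients depending only on the
parameter `v` and on `j`. -/
theorem stmt13 (v : ℝ) (j : ℕ) (hj : 1 ≤ j) :
    ∃ a b c d : ℕ → ℝ, ∀ (n : ℕ), 1 ≤ n → ∀ α : Matrix (Fin n) (Fin n) ℂ,
      let L : Matrix (Fin n ⊕ Fin n) (Fin n ⊕ Fin n) ℂ :=
        Matrix.fromBlocks ((Real.exp (-(2 * v)) : ℂ) • (1 : Matrix (Fin n) (Fin n) ℂ))
          (-((Real.exp (-v) : ℂ) • α))
          ((Real.exp (-v) : ℂ) • αᴴ)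
          ((Real.exp (2 * v) : ℂ) • (1 : Matrix (Fin n) (Fin n) ℂ) - αᴴ * α)
      Matrix.toBlocks₁₁ (L ^ j) =
          ∑ m ∈ Finset.range j, ((a m : ℝ) : ℂ) • (α * αᴴ) ^ (j - 1 - m) ∧
        Matrix.toBlocks₁₂ (L ^ j) =
          α * ∑ m ∈ Finset.range j, ((b m : ℝ) : ℂ) • (αᴴ * α) ^ (j - 1 - m) ∧
        Matrix.toBlocks₂₁ (L ^ j) =
          αᴴ * ∑ m ∈ Finset.range j, ((c m : ℝ) : ℂ) • (α * αᴴ) ^ (j - 1 - m) ∧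
        Matrix.toBlocks₂₂ (L ^ j) =
          (-1 : ℂ) ^ j • (αᴴ * α) ^ j +
            ∑ m ∈ Finset.range j, ((d m : ℝ) : ℂ) • (αᴴ * α) ^ (j - 1 - m) := by
  obtain ⟨k, rfl⟩ : ∃ k, j = k + 1 := ⟨j - 1, by omega⟩
  obtain ⟨A, B, C, D, hA, hB, hC, hD, h⟩ :=
    stmt13_poly (Real.exp (-(2 * v))) (Real.exp (-v)) (Real.exp (2 * v)) k
  refine ⟨fun m => A.coeff (k - m), fun m => B.coeff (k - m), fun m => C.coeff (k - m),
    fun m => D.coeff (k - m), ?_⟩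
  intro n _ α L
  have hL := h n α
  change L ^ (k + 1) = _ at hL
  rw [hL]
  refine ⟨?_, ?_, ?_, ?_⟩
  · rw [Matrix.toBlocks_fromBlocks₁₁, stmt13_sum _ _ k hA]
  · rw [Matrix.toBlocks_fromBlocks₁₂, stmt13_sum _ _ k hB]
  · rw [Matrix.toBlocks_fromBlocks₂₁, stmt13_sum _ _ k hC]
  · rw [Matrix.toBlocks_fromBlocks₂₂, map_add, stmt13_sum _ _ k hD]
    congr 1
    rcases neg_one_pow_eq_or ℂ (k + 1) with h1 | h1 <;>
    rcases Nat.even_or_odd (k + 1) with h2 | h2 <;>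
    simp [h2.neg_one_pow]
end

section
/- Let n ≥ 2 be an integer and let p, q ∈ {1,…,n−1} satisfy gcd(n,p) = 1 and p·q ≡ 1 (mod n). Define (n−1)×(n−1) integer matrices A, B, C as follows: A_{j,k} = 1 if 1 ≤ j ≤ n−p and j ≤ k ≤ j+p−1; A_{j,k} = −1 if n−p < j ≤ n−1 and j+p−n ≤ k ≤ j−1; and A_{j,k} = 0 otherwise; B_{m,k} = 0 if k − m ≡ ℓp (mod n) for some ℓ ∈ {1,…,n−q}, and B_{m,k} = 1 otherwise; C_{m,k} = 0 if k ≡ ℓp (mod n) for some ℓ ∈ {1,…,n−q}, and C_{m,k} = 1 otherwise. Then A · (B − C)ᵀ = 1_{n−1} and det(A) = 1; in particular A is invertible over ℤ and (A⁻¹)ᵀ = B − C. -/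
open Matrix Classical

/-- multiplication by `x ^ c - 1` on `ℤ[x]/(1 + ... + x^(n-1))` in the basis `x, ..., x^(n-1)` -/
noncomputable def DD (n : ℕ) (c : ℤ) : Matrix (Fin (n - 1)) (Fin (n - 1)) ℤ :=
  Matrix.of fun i m =>
    (if (n : ℤ) ∣ ((m : ℕ) : ℤ) + 1 - c - (((i : ℕ) : ℤ) + 1) then 1 else 0)
    - (if (n : ℤ) ∣ ((m : ℕ) : ℤ) + 1 - (((i : ℕ) : ℤ) + 1) then 1 else 0)
    - (if (n : ℤ) ∣ -c - (((i : ℕ) : ℤ) + 1) then 1 else 0)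

lemma sum_aux (n : ℕ) (hn : 2 ≤ n) (g : ℤ → ℤ) (hg : ∀ x, g (x % n) = g x) (h0 : g 0 = 0)
    (c : ℤ) : ∑ m : Fin (n - 1), g (((m : ℕ) : ℤ) + 1) *
      (if (n : ℤ) ∣ c - (((m : ℕ) : ℤ) + 1) then 1 else 0) = g c := by
  have hnpos : (0 : ℤ) < n := by omega
  have h1 := Int.emod_nonneg c hnpos.ne'
  have h2 := Int.emod_lt_of_pos c hnpos
  by_cases hc : c % n = 0
  · rw [← hg c, hc, h0]
    apply Finset.sum_eq_zero
    intro m _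
    rw [if_neg, mul_zero]
    intro h
    have hd : (n : ℤ) ∣ ((m : ℕ) : ℤ) + 1 := by
      have := dvd_sub (Int.dvd_of_emod_eq_zero hc) h
      simpa using this
    have := Int.le_of_dvd (by omega) hd
    have := m.2
    omega
  · have hlt : (c % n).toNat - 1 < n - 1 := by omega
    rw [Finset.sum_eq_single ⟨(c % n).toNat - 1, hlt⟩]
    · have e : (((((c % n).toNat - 1 : ℕ)) : ℤ) + 1) = c % n := by omega
      simp only [e]
      rw [if_pos (Int.dvd_self_sub_emod), hg, mul_one]
    · intro m _ hm
      rw [if_neg, mul_zero]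
      intro h
      apply hm
      have h3 : c % n = (((m : ℕ) : ℤ) + 1) % n := (Int.emod_eq_emod_iff_emod_sub_eq_zero).2
        (Int.emod_eq_zero_of_dvd h)
      have := m.2
      rw [Int.emod_eq_of_lt (a := ((m : ℕ) : ℤ) + 1) (by omega) (by omega)] at h3
      ext
      simp only
      omega
    · simp

lemma mul_DD (n : ℕ) (hn : 2 ≤ n) (c : ℤ) (M : Matrix (Fin (n - 1)) (Fin (n - 1)) ℤ)
    (i l : Fin (n - 1)) (g : ℤ → ℤ) (hg : ∀ x, g (x % n) = g x) (h0 : g 0 = 0)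
    (hM : ∀ m : Fin (n - 1), M i m = g (((m : ℕ) : ℤ) + 1)) :
    (M * DD n c) i l = g (((l : ℕ) : ℤ) + 1 - c) - g (((l : ℕ) : ℤ) + 1) - g (-c) := by
  rw [Matrix.mul_apply, ← sum_aux n hn g hg h0 (((l : ℕ) : ℤ) + 1 - c),
    ← sum_aux n hn g hg h0 (((l : ℕ) : ℤ) + 1), ← sum_aux n hn g hg h0 (-c),
    ← Finset.sum_sub_distrib, ← Finset.sum_sub_distrib]
  apply Finset.sum_congr rfl
  intro m _
  rw [hM, DD, Matrix.of_apply]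
  ring

lemma dvd_small {n x : ℤ} (h1 : -n < x) (h2 : x < n) : n ∣ x ↔ x = 0 := by
  constructor
  · intro h
    exact Int.eq_zero_of_abs_lt_dvd h (abs_lt.2 ⟨h1, h2⟩)
  · rintro rfl; simp

lemma DD_one_apply (n : ℕ) (hn : 2 ≤ n) (i m : Fin (n - 1)) :
    DD n 1 i m = (if (m : ℕ) = i + 1 then 1 else 0) - (if (m : ℕ) = i then 1 else 0)
      - (if (i : ℕ) + 2 = n then 1 else 0) := by
  have := i.2
  have := m.2
  have e1 : ((n : ℤ) ∣ ((m : ℕ) : ℤ) + 1 - 1 - (((i : ℕ) : ℤ) + 1)) ↔ (m : ℕ) = i + 1 := by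
    rw [dvd_small (by omega) (by omega)]; omega
  have e2 : ((n : ℤ) ∣ ((m : ℕ) : ℤ) + 1 - (((i : ℕ) : ℤ) + 1)) ↔ (m : ℕ) = i := by
    rw [dvd_small (by omega) (by omega)]; omega
  have e3 : ((n : ℤ) ∣ -1 - (((i : ℕ) : ℤ) + 1)) ↔ (i : ℕ) + 2 = n := by
    rw [← dvd_add_self_right, dvd_small (by omega) (by omega)]; omega
  simp only [DD, Matrix.of_apply, e1, e2, e3]

lemma DD_one_det (n : ℕ) (hn : 2 ≤ n) : (DD n 1).det ≠ 0 := by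
  intro h
  obtain ⟨v, hv, hv0⟩ := Matrix.exists_mulVec_eq_zero_iff.2 h
  apply hv
  have hstep : ∀ i : ℕ, ∀ hi : i + 1 < n - 1, v ⟨i + 1, hi⟩ = v ⟨i, by omega⟩ := by
    intro i hi
    have := congrFun hv0 ⟨i, by omega⟩
    simp only [Matrix.mulVec, dotProduct, Pi.zero_apply, DD_one_apply n hn, sub_mul,
      Finset.sum_sub_distrib] at this
    rw [Finset.sum_eq_single ⟨i + 1, hi⟩, Finset.sum_eq_single ⟨i, by omega⟩] at this
    · simp only [if_neg (show ¬ (i + 2 = n) by omega)] at this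
      simp at this
      omega
    · intro b _ hb
      rw [if_neg, zero_mul]
      intro h; apply hb; ext; exact h
    · simp
    · intro b _ hb
      rw [if_neg, zero_mul]
      intro h; apply hb; ext; exact h
    · simp
  have hconst : ∀ i : ℕ, ∀ hi : i < n - 1, v ⟨i, hi⟩ = v ⟨0, by omega⟩ := by
    intro i
    induction i with
    | zero => intro _; rfl
    | succ k ih => intro hi; rw [hstep k hi, ih]
  have := congrFun hv0 ⟨n - 2, by omega⟩
  simp only [Matrix.mulVec, dotProduct, Pi.zero_apply, DD_one_apply n hn, sub_mul,
      Finset.sum_sub_distrib] at this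
  rw [Finset.sum_eq_zero, Finset.sum_eq_single ⟨n - 2, by omega⟩, hconst (n - 2)] at this
  · have e : ∀ m : Fin (n - 1), v m = v ⟨0, by omega⟩ := fun m => hconst m m.2
    simp only [e, if_pos (show n - 2 + 2 = n by omega), Finset.sum_const] at this
    simp at this
    have h3 : (n : ℤ) * v ⟨0, by omega⟩ = 0 := by
      rw [Nat.cast_sub (by omega)] at this
      push_cast at this
      linarith
    have h4 : v ⟨0, by omega⟩ = 0 := by
      rcases mul_eq_zero.1 h3 with h | h
      · omega
      · exact h
    ext m
    rw [e m, h4]; rfl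
  · intro b _ hb
    rw [if_neg, zero_mul]
    intro h; apply hb; ext; exact h
  · simp
  · intro b _
    have := b.2
    rw [if_neg, zero_mul]
    omega

lemma DD_det_eq (n p : ℕ) (hn : 2 ≤ n) (hgcd : Nat.gcd n p = 1) :
    (DD n p).det = (DD n 1).det := by
  have hcop : IsCoprime (n : ℤ) (p : ℤ) := Nat.isCoprime_iff_coprime.2 hgcd
  have hnpos : 0 < n := by omega
  have hpos : ∀ i : Fin (n - 1), 0 < ((i : ℕ) + 1) * p % n := by
    intro i
    rcases Nat.eq_zero_or_pos (((i : ℕ) + 1) * p % n) with h | h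
    · have h1 := Nat.Coprime.dvd_of_dvd_mul_right hgcd (Nat.dvd_of_mod_eq_zero h)
      have := Nat.le_of_dvd (by omega) h1
      have := i.2
      omega
    · exact h
  let f : Fin (n - 1) → Fin (n - 1) := fun i => ⟨((i : ℕ) + 1) * p % n - 1, by
    have := hpos i
    have := Nat.mod_lt (((i : ℕ) + 1) * p) hnpos
    omega⟩
  have hf : ∀ i, ∃ t : ℤ, (((f i : ℕ) : ℤ) + 1) = (((i : ℕ) : ℤ) + 1) * p + n * t := by
    intro i
    refine ⟨-(((((i : ℕ) + 1) * p / n : ℕ)) : ℤ), ?_⟩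
    have h1 : ((f i : ℕ)) + 1 = ((i : ℕ) + 1) * p % n := by
      have := hpos i
      simp only [f]; omega
    have h2 := Nat.mod_add_div (((i : ℕ) + 1) * p) n
    rw [← h1] at h2
    have h3 : (((f i : ℕ) : ℤ) + 1) + n * (((((i : ℕ) + 1) * p / n : ℕ)) : ℤ)
      = (((i : ℕ) : ℤ) + 1) * p := by exact_mod_cast h2
    linarith
  have key : ∀ x t : ℤ, (n : ℤ) ∣ x * p + n * t ↔ (n : ℤ) ∣ x := by
    intro x t
    rw [dvd_add_left (dvd_mul_right _ _)]
    exact ⟨fun h => hcop.dvd_of_dvd_mul_right h, fun h => h.mul_right _⟩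
  have k2 : ∀ i m : Fin (n - 1), ((n : ℤ) ∣ ((f m : ℕ) : ℤ) + 1 - (((f i : ℕ) : ℤ) + 1)) ↔
      ((n : ℤ) ∣ ((m : ℕ) : ℤ) + 1 - (((i : ℕ) : ℤ) + 1)) := by
    intro i m
    obtain ⟨t, ht⟩ := hf i
    obtain ⟨s, hs⟩ := hf m
    rw [ht, hs, ← key (((m : ℕ) : ℤ) + 1 - (((i : ℕ) : ℤ) + 1)) (s - t)]
    ring_nf
  have k1 : ∀ i m : Fin (n - 1), ((n : ℤ) ∣ ((f m : ℕ) : ℤ) + 1 - p - (((f i : ℕ) : ℤ) + 1)) ↔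
      ((n : ℤ) ∣ ((m : ℕ) : ℤ) + 1 - 1 - (((i : ℕ) : ℤ) + 1)) := by
    intro i m
    obtain ⟨t, ht⟩ := hf i
    obtain ⟨s, hs⟩ := hf m
    rw [ht, hs, ← key (((m : ℕ) : ℤ) + 1 - 1 - (((i : ℕ) : ℤ) + 1)) (s - t)]
    ring_nf
  have k3 : ∀ i : Fin (n - 1), ((n : ℤ) ∣ -p - (((f i : ℕ) : ℤ) + 1)) ↔
      ((n : ℤ) ∣ -1 - (((i : ℕ) : ℤ) + 1)) := by
    intro i
    obtain ⟨t, ht⟩ := hf i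
    rw [ht, ← key (-1 - (((i : ℕ) : ℤ) + 1)) (- t)]
    ring_nf
  have hinj : Function.Injective f := by
    intro i m h
    have h1 := (k2 i m).1 (by rw [h]; simp)
    have := i.2
    have := m.2
    rw [dvd_small (by omega) (by omega)] at h1
    ext; omega
  let e : Fin (n - 1) ≃ Fin (n - 1) := Equiv.ofBijective f (Finite.injective_iff_bijective.1 hinj)
  rw [← Matrix.det_submatrix_equiv_self e (DD n p)]
  congr 1
  ext i m
  have he : ∀ i, e i = f i := fun _ => rfl
  simp only [Matrix.submatrix_apply, DD, Matrix.of_apply, he, k1, k2, k3]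

/-- the indicator used in `B` and `C` -/
noncomputable def chi (n p q : ℕ) (x : ℤ) : ℤ :=
  if ∃ l ∈ Finset.Icc 1 (n - q), (x % (n : ℤ) = ((l : ℤ) * (p : ℤ)) % (n : ℤ)) then 0 else 1

lemma chi_emod (n p q : ℕ) (x y : ℤ) (h : x % n = y % n) : chi n p q x = chi n p q y := by
  unfold chi
  congr 1
  rw [h]

lemma chi_eq (n p q : ℕ) (hq1 : 1 ≤ q) (hq2 : q ≤ n - 1)
    (hpq : (p * q : ℤ) ≡ 1 [ZMOD n]) (x : ℤ) :
    chi n p q x = if 1 ≤ x * q % n ∧ x * q % n ≤ n - q then 0 else 1 := by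
  unfold chi
  congr 1
  apply propext
  constructor
  · rintro ⟨l, hl, h⟩
    rw [Finset.mem_Icc] at hl
    have h1 : x * q ≡ l [ZMOD n] := by
      calc x * q ≡ (l * p) * q [ZMOD n] := Int.ModEq.mul_right _ h
        _ = l * (p * q) := by ring
        _ ≡ l * 1 [ZMOD n] := hpq.mul_left _
        _ = l := by ring
    have h2 : x * q % n = l := by
      rw [h1]; exact Int.emod_eq_of_lt (by omega) (by omega)
    omega
  · rintro ⟨h1, h2⟩
    refine ⟨(x * q % n).toNat, by rw [Finset.mem_Icc]; omega, ?_⟩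
    rw [Int.toNat_of_nonneg (by omega)]
    change x ≡ _ [ZMOD n]
    symm
    calc (x * q % n) * p ≡ (x * q) * p [ZMOD n] := Int.ModEq.mul_right _ (Int.mod_modEq _ _)
        _ = x * (p * q) := by ring
        _ ≡ x * 1 [ZMOD n] := hpq.mul_left _
        _ = x := by ring

lemma chi_diff (n p q : ℕ) (hq1 : 1 ≤ q) (hq2 : q ≤ n - 1)
    (hpq : (p * q : ℤ) ≡ 1 [ZMOD n]) (x : ℤ) :
    chi n p q (x + p) - chi n p q x =
      (if (n : ℤ) ∣ x + 1 then 1 else 0) - (if (n : ℤ) ∣ x then 1 else 0) := by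
  have hnpos : (0 : ℤ) < n := by omega
  have hcop : IsCoprime (n : ℤ) (q : ℤ) := by
    obtain ⟨t, ht⟩ := hpq.dvd
    exact ⟨t, p, by linarith⟩
  have a0 : (n : ℤ) ∣ x ↔ x * q % n = 0 := by
    rw [← Int.dvd_iff_emod_eq_zero]
    exact ⟨fun h => h.mul_right _, fun h => hcop.dvd_of_dvd_mul_right h⟩
  have a1 : (n : ℤ) ∣ x + 1 ↔ (n : ℤ) ∣ x * q % n + q := by
    have : x * q % n + q = (x + 1) * q - n * (x * q / n) := by
      have := Int.emod_add_mul_ediv (x * q) n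
      linarith
    rw [this, dvd_sub_left (dvd_mul_right _ _)]
    exact ⟨fun h => h.mul_right _, fun h => hcop.dvd_of_dvd_mul_right h⟩
  have a2 : (x + p) * q % n = (x * q % n + 1) % n := by
    have : (x + p) * q ≡ x * q % n + 1 [ZMOD n] := by
      rw [add_mul]
      exact (Int.mod_modEq _ _).symm.add hpq
    exact this
  have h1 := Int.emod_nonneg (x * q) hnpos.ne'
  have h2 := Int.emod_lt_of_pos (x * q) hnpos
  rw [chi_eq n p q hq1 hq2 hpq, chi_eq n p q hq1 hq2 hpq, a2]
  simp only [a0, a1]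
  generalize x * q % n = r at *
  have a3 : (n : ℤ) ∣ r + q ↔ r + q = n := by
    rw [← dvd_sub_self_right, dvd_small (by omega) (by omega)]; omega
  simp only [a3]
  by_cases hr : r + 1 = n
  · rw [hr, Int.emod_self]; split_ifs <;> omega
  · rw [Int.emod_eq_of_lt (by omega) (by omega)]; split_ifs <;> omega

/-- Proposition 5.1 of the thesis: the explicit inverse-transpose `Ω = B − C` of the
coefficient matrix `A` appearing in the type (i) compactification of the trigonometric
Ruijsenaars-Schneider system, together with `det A = 1`. -/
theorem stmt19 (n p q : ℕ) (hn : 2 ≤ n)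
    (hp1 : 1 ≤ p) (hp2 : p ≤ n - 1) (hq1 : 1 ≤ q) (hq2 : q ≤ n - 1)
    (hgcd : Nat.gcd n p = 1) (hpq : p * q ≡ 1 [MOD n]) :
    let A : Matrix (Fin (n - 1)) (Fin (n - 1)) ℤ :=
      Matrix.of fun i k =>
        if (i : ℕ) + 1 ≤ n - p ∧ (i : ℕ) + 1 ≤ (k : ℕ) + 1 ∧ (k : ℕ) + 1 < (i : ℕ) + 1 + p
          then 1
        else if n - p < (i : ℕ) + 1 ∧ (i : ℕ) + 1 + p ≤ n + ((k : ℕ) + 1) ∧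
            (k : ℕ) + 1 < (i : ℕ) + 1 then -1
        else 0
    let B : Matrix (Fin (n - 1)) (Fin (n - 1)) ℤ :=
      Matrix.of fun m k =>
        if ∃ l ∈ Finset.Icc 1 (n - q),
            ((((k : ℕ) : ℤ) - ((m : ℕ) : ℤ)) % (n : ℤ) = ((l : ℤ) * (p : ℤ)) % (n : ℤ))
          then 0 else 1
    let C : Matrix (Fin (n - 1)) (Fin (n - 1)) ℤ :=
      Matrix.of fun m k =>
        if ∃ l ∈ Finset.Icc 1 (n - q),
            ((((k : ℕ) : ℤ) + 1) % (n : ℤ) = ((l : ℤ) * (p : ℤ)) % (n : ℤ))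
          then 0 else 1
    A * (B - C)ᵀ = 1 ∧ A.det = 1 := by
  intro A B C
  have hpq' : (p * q : ℤ) ≡ 1 [ZMOD n] := by exact_mod_cast (Int.natCast_modEq_iff.2 hpq)
  have hA : A * DD n 1 = DD n p := by
    ext i l
    have hi := i.2
    have hl := l.2
    rw [mul_DD n hn 1 A i l (fun x =>
      if ((i : ℕ) : ℤ) + 1 ≤ n - p ∧ ((i : ℕ) : ℤ) + 1 ≤ x % n ∧ x % n < ((i : ℕ) : ℤ) + 1 + p
          then 1
        else if (n : ℤ) - p < ((i : ℕ) : ℤ) + 1 ∧ ((i : ℕ) : ℤ) + 1 + p ≤ n + x % n ∧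
            x % n < ((i : ℕ) : ℤ) + 1 then -1
        else 0)]
    · have e0 : (((l : ℕ) : ℤ) + 1) % n = l + 1 := Int.emod_eq_of_lt (by omega) (by omega)
      have e1 : (((l : ℕ) : ℤ) + 1 - 1) % n = l := by
        rw [add_sub_cancel_right]; exact Int.emod_eq_of_lt (by omega) (by omega)
      have e2 : (-1 : ℤ) % n = n - 1 := by
        rw [← Int.add_emod_right]
        rw [Int.emod_eq_of_lt (by omega) (by omega)]; omega
      have d1 : ((n : ℤ) ∣ ((l : ℕ) : ℤ) + 1 - p - (((i : ℕ) : ℤ) + 1)) ↔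
          ((l : ℕ) : ℤ) = i + p ∨ ((l : ℕ) : ℤ) + n = i + p := by
        constructor
        · intro h
          by_cases hh : ((l : ℕ) : ℤ) + 1 - p - (((i : ℕ) : ℤ) + 1) ≤ -n
          · right
            rw [← dvd_add_self_right, dvd_small (by omega) (by omega)] at h
            omega
          · left
            rw [dvd_small (by omega) (by omega)] at h
            omega
        · rintro (h | h)
          · exact ⟨0, by omega⟩
          · exact ⟨-1, by omega⟩
      have d2 : ((n : ℤ) ∣ ((l : ℕ) : ℤ) + 1 - (((i : ℕ) : ℤ) + 1)) ↔ (l : ℕ) = i := by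
        rw [dvd_small (by omega) (by omega)]; omega
      have d3 : ((n : ℤ) ∣ -p - (((i : ℕ) : ℤ) + 1)) ↔ (i : ℕ) + 1 + p = n := by
        rw [← dvd_add_self_right, dvd_small (by omega) (by omega)]; omega
      simp only [DD, Matrix.of_apply, e0, e1, e2, d1, d2, d3]
      split_ifs <;> omega
    · intro x
      simp only [Int.emod_emod]
    · simp only [Int.zero_emod]
      split_ifs <;> omega
    · intro m
      have hm := m.2
      have e0 : (((m : ℕ) : ℤ) + 1) % n = m + 1 := Int.emod_eq_of_lt (by omega) (by omega)
      simp only [A, Matrix.of_apply, e0]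
      split_ifs <;> omega
  have hO : (B - C)ᵀ * DD n p = DD n 1 := by
    ext k l
    have hk := k.2
    have hl := l.2
    rw [mul_DD n hn p _ k l (fun x => chi n p q (((k : ℕ) : ℤ) + 1 - x) -
      chi n p q (((k : ℕ) : ℤ) + 1))]
    · have c1 := chi_diff n p q hq1 hq2 hpq' (((k : ℕ) : ℤ) + 1 - (((l : ℕ) : ℤ) + 1))
      have c2 := chi_diff n p q hq1 hq2 hpq' (((k : ℕ) : ℤ) + 1)
      have r1 : (((k : ℕ) : ℤ) + 1 - (((l : ℕ) : ℤ) + 1 - p)) =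
        ((k : ℕ) : ℤ) + 1 - (((l : ℕ) : ℤ) + 1) + p := by ring
      have r2 : (((k : ℕ) : ℤ) + 1 - -(p : ℤ)) = ((k : ℕ) : ℤ) + 1 + p := by ring
      have d1 : ((n : ℤ) ∣ ((k : ℕ) : ℤ) + 1 - (((l : ℕ) : ℤ) + 1) + 1) ↔ (l : ℕ) = k + 1 := by
        rw [dvd_small (by omega) (by omega)]; omega
      have d2 : ((n : ℤ) ∣ ((k : ℕ) : ℤ) + 1 - (((l : ℕ) : ℤ) + 1)) ↔ (l : ℕ) = k := by
        rw [dvd_small (by omega) (by omega)]; omega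
      have d3 : ((n : ℤ) ∣ ((k : ℕ) : ℤ) + 1 + 1) ↔ (k : ℕ) + 2 = n := by
        rw [← dvd_sub_self_right, dvd_small (by omega) (by omega)]; omega
      have d4 : ¬ ((n : ℤ) ∣ ((k : ℕ) : ℤ) + 1) := by
        rw [dvd_small (by omega) (by omega)]; omega
      simp only [d1, d2] at c1
      simp only [d3, d4, if_false] at c2
      simp only [r1, r2, DD_one_apply n hn]
      linarith
    · intro x
      rw [chi_emod n p q (((k : ℕ) : ℤ) + 1 - x % n) (((k : ℕ) : ℤ) + 1 - x)]
      simp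
    · simp
    · intro m
      have r : ((k : ℕ) : ℤ) + 1 - (((m : ℕ) : ℤ) + 1) = k - m := by ring
      simp only [r]
      simp only [B, C, chi, Matrix.transpose_apply, Matrix.sub_apply, Matrix.of_apply]
  have hdet : A.det = 1 := by
    have h := congrArg Matrix.det hA
    rw [Matrix.det_mul, DD_det_eq n p hn hgcd] at h
    exact mul_right_cancel₀ (DD_one_det n hn) (by rw [h, one_mul])
  refine ⟨?_, hdet⟩
  have h1 : (B - C)ᵀ * A * DD n 1 = 1 * DD n 1 := by
    rw [Matrix.mul_assoc, hA, hO, Matrix.one_mul]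
  have hreg : ∀ X Y : Matrix (Fin (n - 1)) (Fin (n - 1)) ℤ, X * DD n 1 = Y * DD n 1 → X = Y := by
    intro X Y h
    have h2 := congrArg (fun Z => Z * (DD n 1).adjugate) h
    simp only [Matrix.mul_assoc, Matrix.mul_adjugate, Matrix.mul_smul, Matrix.mul_one] at h2
    exact smul_right_injective _ (DD_one_det n hn) h2
  exact mul_eq_one_comm.1 (hreg _ _ h1)
end
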